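/- arXiv:1512.03531 — 5 statements merged into one kernel-verified Lean document; each statement's English description precedes it below -/
import Mathlib

section
/- Let F be a field and let B be a nonzero linear subspace of the n×n matrices over F. Let s* be the maximum integer s ≥ 0 such that B has an s-shrunk subspace, and set r = n − s* (the non-commutative rank of B). Then there exists a natural number N, depending only on n, such that whenever |F| ≥ N, there exists an integer d with 1 ≤ d ≤ r + 1 and a matrix A in the (d,d)-blow-up B^{(d,d)} with rank(A) = rd. -/
open Matrix Kronecker

/-- The (k,ℓ)-blow-up of a matrix space `B ≤ M(n,F)`:
the span of all Kronecker products `A ⊗ T` with `A ∈ B` and `T ∈ M(k×ℓ,F)`. -/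
def blowUp {F : Type} [Field F] {n : ℕ} (B : Submodule F (Matrix (Fin n) (Fin n) F))
    (k ℓ : ℕ) : Submodule F (Matrix (Fin n × Fin k) (Fin n × Fin ℓ) F) :=
  Submodule.span F {M | ∃ A ∈ B, ∃ T : Matrix (Fin k) (Fin ℓ) F, M = A ⊗ₖ T}

/-- `U ≤ F^n` is an `s`-shrunk subspace of `B` if `dim B(U) ≤ dim U − s`. -/
def IsShrunkSubspace {F : Type} [Field F] {n : ℕ}
    (B : Submodule F (Matrix (Fin n) (Fin n) F)) (U : Submodule F (Fin n → F)) (s : ℕ) : Prop :=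
  Module.finrank F (Submodule.span F {v | ∃ A ∈ B, ∃ u ∈ U, v = A.mulVec u}) + s ≤
    Module.finrank F U

/-!
If `U` is `s`-shrunk by `B`, then `U ⊗ F^d` is `s * d`-shrunk by the `(d, d)`-blow-up, so matrices
there have rank at most `r * d`.

For the converse, ranks in the `(d, d)`-blow-up can be rounded up to multiples of `d`: once the
entries below the diagonals of the `d × d` blocks are scaled by one more indeterminate, the generic
matrix of the blow-up is a matrix over a cyclic division algebra of degree `d`. Its rank is hence a
multiple of `d`, attained by a nonsingular block minor, and a large enough field contains values of
the indeterminates at which this minor does not vanish.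

Now let `A` have rank at least `k * d`, where `k < r`. Either all the chains
`A w₀ = 0`, `A wᵢ₊₁ = Xᵢ wᵢ` with `Xᵢ` in the blow-up can be extended, and then their last vectors
span a shrunk subspace that forces `rank A ≥ r * d`, or the matrix of some system of chains lies in
a further blow-up and has larger rank relative to its size. Rounding up, this gives rank
`(k + 1) * D` in some `(D, D)`-blow-up. As long as `D > k + 2`, deleting one row and one column from
each block costs so little rank that rounding up restores the multiple `k + 1`, so `D` decreases to
at most `k + 2`.
-/

section BlockSubmatrix

variable {R m n m' n' κ κ' : Type*}

/-- The submatrix of a block matrix formed by the block rows `f` and the block columns `g`. -/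
abbrev blockSubmatrix (M : Matrix (m × κ) (n × κ') R) (f : m' → m) (g : n' → n) :
    Matrix (m' × κ) (n' × κ') R :=
  M.submatrix (Prod.map f id) (Prod.map g id)

variable [CommRing R] [Fintype κ] [DecidableEq κ]

lemma det_blockSubmatrix_snoc (M : Matrix (m × κ) (n × κ) R) {k : ℕ} (f : Fin k → m)
    (g : Fin k → n) (i : m) (j : n) :
    (blockSubmatrix M (Fin.snoc f i : Fin (k + 1) → m) (Fin.snoc g j : Fin (k + 1) → n)).det =
      (fromBlocks (blockSubmatrix M f g) (blockSubmatrix M f fun _ : Unit => j)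
        (blockSubmatrix M (fun _ : Unit => i) g)
        (blockSubmatrix M (fun _ : Unit => i) fun _ : Unit => j)).det := by
  let ε : (Fin k × κ) ⊕ (Unit × κ) ≃ Fin (k + 1) × κ :=
    (Equiv.sumProdDistrib _ _ _).symm.trans
      (((Equiv.sumCongr (Equiv.refl _) (Equiv.ofUnique Unit (Fin 1))).trans
        finSumFinEquiv).prodCongr (Equiv.refl κ))
  have hinl : ∀ x : Fin k × κ, ε (Sum.inl x) = (x.1.castSucc, x.2) := fun _ => rfl
  have hinr : ∀ x : Unit × κ, ε (Sum.inr x) = (Fin.last k, x.2) := fun _ => rfl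
  rw [← det_submatrix_equiv_self ε]
  congr 1
  ext (x | x) (y | y) <;> simp [hinl, hinr, Prod.map]

variable [IsDomain R]

lemma mul_card_le_rank_of_det_blockSubmatrix_ne_zero [Fintype n] {M : Matrix (m × κ) (n × κ) R}
    {k : ℕ} {f : Fin k → m} {g : Fin k → n} (hfg : (blockSubmatrix M f g).det ≠ 0) :
    k * Fintype.card κ ≤ M.rank := by
  have hle := M.rank_submatrix_le (Prod.map f (id : κ → κ)) (Prod.map g (id : κ → κ))
  rwa [rank_of_det_ne_zero hfg, Fintype.card_prod, Fintype.card_fin] at hle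

lemma exists_maximal_nonsingular_blockSubmatrix [Nonempty κ] [Finite n]
    (M : Matrix (m × κ) (n × κ) R) :
    ∃ (k : ℕ) (f : Fin k → m) (g : Fin k → n), (blockSubmatrix M f g).det ≠ 0 ∧
      ∀ i j, (blockSubmatrix M (Fin.snoc f i : Fin (k + 1) → m)
        (Fin.snoc g j : Fin (k + 1) → n)).det = 0 := by
  cases nonempty_fintype n
  let S : Set ℕ := {k | ∃ (f : Fin k → m) (g : Fin k → n), (blockSubmatrix M f g).det ≠ 0}
  have hS : S.Nonempty := ⟨0, Fin.elim0, Fin.elim0, by simp⟩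
  have hbdd : BddAbove S := ⟨M.rank, fun k ⟨f, g, hfg⟩ =>
    (Nat.le_mul_of_pos_right k Fintype.card_pos).trans
      (mul_card_le_rank_of_det_blockSubmatrix_ne_zero hfg)⟩
  obtain ⟨f, g, hfg⟩ := Nat.sSup_mem hS hbdd
  refine ⟨sSup S, f, g, hfg, fun i j => ?_⟩
  by_contra hdet
  exact (Nat.lt_succ_self _).not_ge (le_csSup hbdd ⟨_, _, hdet⟩)

lemma det_schur_eq_zero {k l : Type*} [Fintype k] [DecidableEq k] [Fintype l] [DecidableEq l]
    {A : Matrix k k R} {b : Matrix k l R} {c : Matrix l k R} {e : Matrix l l R}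
    (hA : A.det ≠ 0) (h : (fromBlocks A b c e).det = 0) :
    (A.det • e - c * A.adjugate * b).det = 0 := by
  have hmul : fromBlocks A b c e * fromBlocks A.adjugate (-(A.adjugate * b)) 0 (A.det • 1) =
      fromBlocks (A.det • 1) 0 (c * A.adjugate) (A.det • e - c * A.adjugate * b) := by
    simp [fromBlocks_multiply, ← Matrix.mul_assoc, mul_adjugate, sub_eq_neg_add]
  have hdet := congrArg det hmul
  rw [det_mul, h, zero_mul, det_fromBlocks_zero₁₂, eq_comm, mul_eq_zero] at hdet
  refine hdet.resolve_left ?_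
  rw [det_smul, det_one, mul_one]
  exact pow_ne_zero _ hA

end BlockSubmatrix

/-- A block matrix `M` with blocks indexed by `κ` is *twisted* with respect to an endomorphism `σ`,
a permutation `p` of `κ` and weights `w` if applying `σ` to the entries and `p` to the inner indices
amounts to conjugating by the diagonal matrix of weights. For a cyclic permutation `p` the twisted
`κ × κ` matrices form an order in a cyclic algebra. -/
def IsTwisted {P κ m n : Type*} [CommRing P] (σ : P →+* P) (p : Equiv.Perm κ) (w : κ → P)
    (M : Matrix (m × κ) (n × κ) P) : Prop :=
  ∀ i a j c, w a * σ (M (i, p a) (j, p c)) = M (i, a) (j, c) * w c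

namespace IsTwisted

variable {P κ m n l : Type*} [CommRing P] {σ : P →+* P} {p : Equiv.Perm κ} {w : κ → P}

lemma submatrix {m' n' : Type*} {M : Matrix (m × κ) (n × κ) P} (hM : IsTwisted σ p w M)
    (f : m' → m) (g : n' → n) : IsTwisted σ p w (blockSubmatrix M f g) :=
  fun i a j c => hM (f i) a (g j) c

lemma sub {M N : Matrix (m × κ) (n × κ) P} (hM : IsTwisted σ p w M) (hN : IsTwisted σ p w N) :
    IsTwisted σ p w (M - N) := fun i a j c => by
  simp only [Matrix.sub_apply, map_sub, mul_sub, sub_mul, hM i a j c, hN i a j c]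

lemma smul {M : Matrix (m × κ) (n × κ) P} (hM : IsTwisted σ p w M) {t : P} (ht : σ t = t) :
    IsTwisted σ p w (t • M) := fun i a j c => by
  simp only [Matrix.smul_apply, smul_eq_mul, map_mul, ht]
  linear_combination t * hM i a j c

lemma mul [Fintype κ] [Fintype n] {M : Matrix (m × κ) (n × κ) P} {N : Matrix (n × κ) (l × κ) P}
    (hM : IsTwisted σ p w M) (hN : IsTwisted σ p w N) : IsTwisted σ p w (M * N) := by
  intro i a j c
  simp only [Matrix.mul_apply, map_sum, map_mul, Finset.mul_sum, Finset.sum_mul]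
  rw [← Equiv.sum_comp ((Equiv.refl n).prodCongr p)]
  refine Finset.sum_congr rfl fun x _ => ?_
  have hMx := hM i a x.1 x.2
  have hNx := hN x.1 x.2 j c
  simp only [Equiv.prodCongr_apply, Prod.map, Equiv.refl_apply, Prod.mk.eta] at *
  linear_combination σ (N (x.1, p x.2) (j, p c)) * hMx + M (i, a) x * hNx

variable [Fintype κ] [DecidableEq κ] [Fintype m] [DecidableEq m]

lemma diagonal_mul {M : Matrix (m × κ) (m × κ) P} (hM : IsTwisted σ p w M) :
    diagonal (fun x : m × κ => w x.2) * (σ.mapMatrix M).submatrix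
      ((Equiv.refl m).prodCongr p) ((Equiv.refl m).prodCongr p) =
      M * diagonal (fun x : m × κ => w x.2) := by
  ext x y
  simpa [Matrix.diagonal_mul, Matrix.mul_diagonal, Prod.map] using hM x.1 x.2 y.1 y.2

variable [IsDomain P]

lemma map_det (hw : ∀ a, w a ≠ 0) {M : Matrix (m × κ) (m × κ) P} (hM : IsTwisted σ p w M) :
    σ M.det = M.det := by
  have hdet := congrArg det hM.diagonal_mul
  rw [det_mul, det_mul, det_submatrix_equiv_self, ← RingHom.map_det, det_diagonal,
    mul_comm] at hdet
  exact mul_right_cancel₀ (Finset.prod_ne_zero_iff.2 fun x _ => hw x.2) hdet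

lemma adjugate (hw : ∀ a, w a ≠ 0) {M : Matrix (m × κ) (m × κ) P} (hM : IsTwisted σ p w M)
    (h0 : M.det ≠ 0) : IsTwisted σ p w M.adjugate := by
  set ε : (m × κ) ≃ (m × κ) := (Equiv.refl m).prodCongr p
  set W : Matrix (m × κ) (m × κ) P := diagonal fun x : m × κ => w x.2 with hW
  set M' := (σ.mapMatrix M).submatrix ε ε with hM'
  have hconj : W * M' = M * W := hM.diagonal_mul
  have hdet : M'.det = M.det := by
    rw [hM', det_submatrix_equiv_self, ← RingHom.map_det, hM.map_det hw]
  have hadj : W * M'.adjugate = M.adjugate * W := by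
    refine smul_right_injective _ h0 ?_
    calc M.det • (W * M'.adjugate)
        = M.adjugate * (M * W) * M'.adjugate := by
          rw [← Matrix.mul_assoc M.adjugate, adjugate_mul, Matrix.smul_mul, Matrix.smul_mul,
            Matrix.one_mul]
      _ = M.adjugate * W * (M' * M'.adjugate) := by rw [← hconj]; simp only [Matrix.mul_assoc]
      _ = M.det • (M.adjugate * W) := by rw [mul_adjugate, hdet, Matrix.mul_smul, Matrix.mul_one]
  intro i a j c
  have hentry := congrFun (congrFun hadj (i, a)) (j, c)
  rw [hM', adjugate_submatrix_equiv_self, ← RingHom.map_adjugate] at hentry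
  simpa [hW, ε, Matrix.diagonal_mul, Matrix.mul_diagonal] using hentry

/-- Twisted `κ × κ` matrices behave like a division ring here: the Schur complement of a maximal
nonsingular block minor is twisted and singular, hence zero. -/
theorem exists_nonsingular_blockSubmatrix {m n : Type*} [Fintype n] [Nonempty κ]
    (hw : ∀ a, w a ≠ 0)
    (hdiv : ∀ N : Matrix (Unit × κ) (Unit × κ) P, IsTwisted σ p w N → N ≠ 0 → N.det ≠ 0)
    {M : Matrix (m × κ) (n × κ) P} (hM : IsTwisted σ p w M) :
    ∃ (k : ℕ) (f : Fin k → m) (g : Fin k → n), (blockSubmatrix M f g).det ≠ 0 ∧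
      M.rank ≤ k * Fintype.card κ := by
  obtain ⟨k, f, g, hfg, hmax⟩ := exists_maximal_nonsingular_blockSubmatrix M
  refine ⟨k, f, g, hfg, ?_⟩
  set A := blockSubmatrix M f g
  have hA : IsTwisted σ p w A := hM.submatrix f g
  have hschur : ∀ i j, A.det • blockSubmatrix M (fun _ : Unit => i) (fun _ : Unit => j) -
      blockSubmatrix M (fun _ : Unit => i) g * A.adjugate *
        blockSubmatrix M f (fun _ : Unit => j) = 0 := by
    intro i j
    by_contra hne
    refine hdiv _ (((hM.submatrix _ _).smul (hA.map_det hw)).sub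
      (((hM.submatrix _ _).mul (hA.adjugate hw hfg)).mul (hM.submatrix _ _))) hne ?_
    exact det_schur_eq_zero hfg ((det_blockSubmatrix_snoc M f g i j).symm.trans (hmax i j))
  have hfactor : A.det • M =
      blockSubmatrix M id g * A.adjugate * blockSubmatrix M f id := by
    ext ⟨i, a⟩ ⟨j, c⟩
    exact sub_eq_zero.1 (congrFun (congrFun (hschur i j) ((), a)) ((), c))
  calc M.rank = (A.det • M).rank :=
        (rank_smul_of_mem_nonZeroDivisors M (mem_nonZeroDivisors_of_ne_zero hfg)).symm
    _ ≤ (blockSubmatrix M id g * A.adjugate).rank := hfactor ▸ rank_mul_le_left _ _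
    _ ≤ k * Fintype.card κ := (rank_le_card_width _).trans_eq (by simp)

end IsTwisted

section Degree

open MvPolynomial

variable {R V : Type*} [CommRing R]

lemma sum_ne_zero_of_degreeOf_lt {ι : Type*} {v : V} {s : Finset ι} {f : ι → MvPolynomial V R}
    {i : ι} (hi : i ∈ s) (hfi : f i ≠ 0)
    (hlt : ∀ j ∈ s, j ≠ i → f j ≠ 0 → degreeOf v (f j) < degreeOf v (f i)) :
    ∑ j ∈ s, f j ≠ 0 := by
  classical
  intro hsum
  let t := (s.erase i).filter fun j => f j ≠ 0
  have hfi_eq : f i = -∑ j ∈ t, f j := by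
    rw [Finset.sum_filter_ne_zero, eq_neg_iff_add_eq_zero, Finset.add_sum_erase s f hi, hsum]
  have ht : t.Nonempty := by
    rw [Finset.nonempty_iff_ne_empty]
    intro ht
    exact hfi (by rw [hfi_eq, ht, Finset.sum_empty, neg_zero])
  obtain ⟨j, hj, hsup⟩ := Finset.exists_mem_eq_sup t ht fun j => degreeOf v (f j)
  have hle : degreeOf v (f i) ≤ degreeOf v (f j) := by
    rw [← hsup, hfi_eq, degreeOf_neg]
    exact degreeOf_sum_le v t f
  simp only [t, Finset.mem_filter, Finset.mem_erase] at hj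
  exact (hlt j hj.1.2 hj.1.1 hj.2).not_ge hle

lemma degreeOf_units_smul (v : V) (u : ℤˣ) (p : MvPolynomial V R) :
    degreeOf v (u • p) = degreeOf v p := by
  rcases Int.units_eq_one_or u with rfl | rfl
  · rw [one_smul]
  · rw [Units.neg_smul, one_smul, degreeOf_neg]

lemma degreeOf_det_le {n : Type*} [Fintype n] [DecidableEq n] {M : Matrix n n (MvPolynomial V R)}
    {v : V} {D : ℕ} (h : ∀ i j, (M i j).degreeOf v ≤ D) :
    M.det.degreeOf v ≤ Fintype.card n * D := by
  rw [det_apply]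
  refine (degreeOf_sum_le _ _ _).trans (Finset.sup_le fun π _ => ?_)
  rw [degreeOf_units_smul]
  exact (degreeOf_prod_le _ _ _).trans
    ((Finset.sum_le_sum fun i _ => h _ _).trans_eq (by simp))

/-- The potential `α` cancels along every permutation, so `π₀` gives the only term of the
determinant that attains the top degree. -/
lemma det_ne_zero_of_forall_weight_lt [IsDomain R] {n : Type*} [Fintype n] [DecidableEq n]
    {M : Matrix n n (MvPolynomial V R)} {v : V} (D : ℕ) (α : n → ℤ) {μ : ℤ} (π₀ : Equiv.Perm n)
    (hne : ∀ c, M (π₀ c) c ≠ 0)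
    (heq : ∀ c, D * (degreeOf v (M (π₀ c) c) : ℤ) + α c - α (π₀ c) = μ)
    (hlt : ∀ a c, M a c ≠ 0 → a ≠ π₀ c → D * (degreeOf v (M a c) : ℤ) + α c - α a < μ) :
    M.det ≠ 0 := by
  have hdeg : ∀ π : Equiv.Perm n, (∀ c, M (π c) c ≠ 0) →
      D * (degreeOf v (∏ c, M (π c) c) : ℤ) =
        ∑ c, (D * (degreeOf v (M (π c) c) : ℤ) + α c - α (π c)) := by
    intro π hπ
    rw [degreeOf_prod_eq _ _ fun c _ => hπ c, Finset.sum_sub_distrib, Finset.sum_add_distrib,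
      Equiv.sum_comp π α, add_sub_cancel_right, Nat.cast_sum, Finset.mul_sum]
  rw [det_apply]
  refine sum_ne_zero_of_degreeOf_lt (v := v) (Finset.mem_univ π₀)
    ((smul_ne_zero_iff_ne _).2 (Finset.prod_ne_zero_iff.2 fun c _ => hne c)) fun π _ hπ hprod => ?_
  replace hprod : ∀ c, M (π c) c ≠ 0 := fun c =>
    Finset.prod_ne_zero_iff.1 ((smul_ne_zero_iff_ne _).1 hprod) c (Finset.mem_univ c)
  obtain ⟨c₀, hc₀⟩ := DFunLike.ne_iff.1 hπ
  rw [degreeOf_units_smul, degreeOf_units_smul]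
  have hsum : D * (degreeOf v (∏ c, M (π c) c) : ℤ) < D * (degreeOf v (∏ c, M (π₀ c) c) : ℤ) := by
    rw [hdeg π hprod, hdeg π₀ hne]
    refine Finset.sum_lt_sum (fun c _ => ?_) ⟨c₀, Finset.mem_univ c₀, ?_⟩
    · rw [heq]
      by_cases hc : π c = π₀ c
      · rw [hc, heq]
      · exact (hlt _ _ (hprod c) hc).le
    · rw [heq]
      exact hlt _ _ (hprod c₀) hc₀
  exact_mod_cast lt_of_mul_lt_mul_left hsum (Int.natCast_nonneg D)

lemma exists_eval_ne_zero_of_degreeOf_le [IsDomain R] [Finite V] {D : ℕ}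
    (hR : ((D + 1 : ℕ) : Cardinal) ≤ Cardinal.mk R) {q : MvPolynomial V R} (hq : q ≠ 0)
    (hD : ∀ v, q.degreeOf v ≤ D) : ∃ x : V → R, eval x q ≠ 0 := by
  obtain ⟨S, hS⟩ := Cardinal.exists_finset_eq_card hR
  by_contra! hall
  exact hq (eq_zero_of_eval_zero_at_prod_finset q (fun _ => S)
    (fun v => by have := hD v; omega) fun x _ => hall x)

end Degree

section CyclicTwist

open MvPolynomial Fin.CommRing

variable {R V : Type*} [CommRing R] {v : V} {e : ℕ}

/-- The weights of the cyclic shift `a ↦ a + 1` on `Fin (e + 1)`: a factor `X v` when it wraps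
around. -/
noncomputable def wrapWeight (R : Type*) [CommRing R] {V : Type*} (v : V) (e : ℕ)
    (a : Fin (e + 1)) : MvPolynomial V R :=
  if a = Fin.last e then X v else 1

lemma wrapWeight_ne_zero [Nontrivial R] (a : Fin (e + 1)) : wrapWeight R v e a ≠ 0 := by
  unfold wrapWeight
  split_ifs
  exacts [X_ne_zero v, one_ne_zero]

lemma val_add_one_add_mul_degreeOf_wrapWeight [Nontrivial R] (a : Fin (e + 1)) :
    (a + 1).val + (e + 1) * degreeOf v (wrapWeight R v e a) = a.val + 1 := by
  unfold wrapWeight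
  split_ifs with ha
  · simp [ha]
  · simp [Fin.val_add_one, ha]

/-- Over the fraction field with `v` an `e + 1`-st power, this is `e + 1` times the degree of the
`(a, c)` entry after conjugation by `diag (v ^ (c / (e + 1)))`, which makes it shift invariant. -/
noncomputable def cyclicDegree (v : V) (M : Matrix (Fin (e + 1)) (Fin (e + 1)) (MvPolynomial V R))
    (a c : Fin (e + 1)) : ℤ :=
  ((e + 1 : ℕ) : ℤ) * (degreeOf v (M a c) : ℤ) + (c.val : ℤ) - (a.val : ℤ)

lemma intCast_cyclicDegree (M : Matrix (Fin (e + 1)) (Fin (e + 1)) (MvPolynomial V R))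
    (a c : Fin (e + 1)) : (cyclicDegree v M a c : Fin (e + 1)) = c - a := by
  have hzero : ((e + 1 : ℕ) : Fin (e + 1)) = 0 := Fin.natCast_self (e + 1)
  simp only [cyclicDegree, Int.cast_sub, Int.cast_add, Int.cast_mul, Int.cast_natCast, hzero,
    zero_mul, zero_add, Fin.cast_val_eq_self]

variable [IsDomain R] {σ : MvPolynomial V R →+* MvPolynomial V R}
  {M : Matrix (Fin (e + 1)) (Fin (e + 1)) (MvPolynomial V R)}

lemma cyclicDegree_add_one (hσ : ∀ q, degreeOf v (σ q) = degreeOf v q)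
    (hM : ∀ a c, wrapWeight R v e a * σ (M (a + 1) (c + 1)) = M a c * wrapWeight R v e c)
    {a c : Fin (e + 1)} (hac : M a c ≠ 0) :
    M (a + 1) (c + 1) ≠ 0 ∧ cyclicDegree v M (a + 1) (c + 1) = cyclicDegree v M a c := by
  have hσM : σ (M (a + 1) (c + 1)) ≠ 0 := fun h0 =>
    mul_ne_zero hac (wrapWeight_ne_zero c) (by rw [← hM, h0, mul_zero])
  refine ⟨fun h0 => hσM (by rw [h0, map_zero]), ?_⟩
  have hdeg := congrArg (degreeOf v) (hM a c)
  rw [degreeOf_mul_eq (wrapWeight_ne_zero a) hσM, degreeOf_mul_eq hac (wrapWeight_ne_zero c),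
    hσ] at hdeg
  have ha := val_add_one_add_mul_degreeOf_wrapWeight (R := R) (v := v) a
  have hc := val_add_one_add_mul_degreeOf_wrapWeight (R := R) (v := v) c
  unfold cyclicDegree
  zify at hdeg ha hc
  push_cast
  linear_combination (e + 1 : ℤ) * hdeg + hc - ha

lemma cyclicDegree_add (hσ : ∀ q, degreeOf v (σ q) = degreeOf v q)
    (hM : ∀ a c, wrapWeight R v e a * σ (M (a + 1) (c + 1)) = M a c * wrapWeight R v e c)
    {a c : Fin (e + 1)} (hac : M a c ≠ 0) (δ : Fin (e + 1)) :
    M (a + δ) (c + δ) ≠ 0 ∧ cyclicDegree v M (a + δ) (c + δ) = cyclicDegree v M a c := by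
  rw [← Fin.cast_val_eq_self δ]
  induction δ.val with
  | zero => simpa using hac
  | succ j ih =>
    obtain ⟨hne, hdeg⟩ := cyclicDegree_add_one hσ hM ih.1
    rw [Nat.cast_succ, ← add_assoc, ← add_assoc]
    exact ⟨hne, hdeg.trans ih.2⟩

/-- The entries of maximal cyclic degree fill a cyclic diagonal, by shift invariance and because
the cyclic degree modulo `e + 1` determines the diagonal. -/
theorem IsTwisted.det_ne_zero (hσ : ∀ q, degreeOf v (σ q) = degreeOf v q)
    {N : Matrix (Unit × Fin (e + 1)) (Unit × Fin (e + 1)) (MvPolynomial V R)}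
    (hN : IsTwisted σ (Equiv.addRight 1) (wrapWeight R v e) N) (hN0 : N ≠ 0) : N.det ≠ 0 := by
  let M : Matrix (Fin (e + 1)) (Fin (e + 1)) (MvPolynomial V R) :=
    N.submatrix (Equiv.punitProd _).symm (Equiv.punitProd _).symm
  have hM : ∀ a c, wrapWeight R v e a * σ (M (a + 1) (c + 1)) = M a c * wrapWeight R v e c :=
    fun a c => hN () a () c
  have : Nonempty {x : Fin (e + 1) × Fin (e + 1) // M x.1 x.2 ≠ 0} := by
    by_contra! hempty
    refine hN0 (Matrix.ext fun x y => ?_)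
    by_contra hxy
    exact hempty.false ⟨(x.2, y.2), hxy⟩
  obtain ⟨⟨⟨a₀, c₀⟩, hne⟩, hmax⟩ := Finite.exists_max
    fun x : {x : Fin (e + 1) × Fin (e + 1) // M x.1 x.2 ≠ 0} => cyclicDegree v M x.1.1 x.1.2
  have hdiag : ∀ c, M (c + (a₀ - c₀)) c ≠ 0 ∧
      cyclicDegree v M (c + (a₀ - c₀)) c = cyclicDegree v M a₀ c₀ := fun c => by
    have hshift := cyclicDegree_add hσ hM hne (c - c₀)
    rwa [add_sub_cancel, add_sub_left_comm] at hshift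
  have hoff : ∀ a c, M a c ≠ 0 → a ≠ c + (a₀ - c₀) →
      cyclicDegree v M a c < cyclicDegree v M a₀ c₀ := fun a c hac ha => by
    refine (hmax ⟨(a, c), hac⟩).lt_of_ne fun heq => ha ?_
    have hcast := congrArg (Int.cast : ℤ → Fin (e + 1)) heq
    rw [intCast_cyclicDegree, intCast_cyclicDegree] at hcast
    linear_combination -hcast
  rw [← det_submatrix_equiv_self (Equiv.punitProd (Fin (e + 1))).symm N]
  exact det_ne_zero_of_forall_weight_lt (e + 1) (fun a => (a.val : ℤ))
    (Equiv.addRight (a₀ - c₀)) (fun c => (hdiag c).1) (fun c => (hdiag c).2) hoff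

end CyclicTwist

section BlowUp

variable {R m n κ κ' : Type*} [CommSemiring R]

/-- The blow-up of a space `B` of `m × n` matrices: the span of the Kronecker products of its
elements with `κ × κ'` matrices. -/
def blockBlowUp (B : Submodule R (Matrix m n R)) (κ κ' : Type*) :
    Submodule R (Matrix (m × κ) (n × κ') R) :=
  Submodule.span R {M | ∃ A ∈ B, ∃ T : Matrix κ κ' R, M = A ⊗ₖ T}

variable {B : Submodule R (Matrix m n R)}

lemma kronecker_mem_blockBlowUp {A : Matrix m n R} (hA : A ∈ B) (T : Matrix κ κ' R) :
    A ⊗ₖ T ∈ blockBlowUp B κ κ' :=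
  Submodule.subset_span ⟨A, hA, T, rfl⟩

lemma eq_sum_submatrix_kronecker_single [Fintype κ] [DecidableEq κ] [Fintype κ'] [DecidableEq κ']
    (M : Matrix (m × κ) (n × κ') R) :
    M = ∑ a, ∑ c, M.submatrix (·, a) (·, c) ⊗ₖ single a c 1 := by
  ext ⟨i, a⟩ ⟨j, c⟩
  simp only [Matrix.sum_apply, kroneckerMap_apply, Matrix.submatrix_apply, Matrix.single_apply]
  rw [Finset.sum_eq_single a, Finset.sum_eq_single c] <;> simp +contextual

lemma mem_blockBlowUp_iff [Finite κ] [Finite κ'] {M : Matrix (m × κ) (n × κ') R} :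
    M ∈ blockBlowUp B κ κ' ↔ ∀ a c, M.submatrix (·, a) (·, c) ∈ B := by
  classical
  cases nonempty_fintype κ
  cases nonempty_fintype κ'
  refine ⟨fun hM a c => ?_, fun h => ?_⟩
  · induction hM using Submodule.span_induction with
    | mem M hM =>
      obtain ⟨A, hA, T, rfl⟩ := hM
      convert B.smul_mem (T a c) hA using 1
      ext i j
      exact mul_comm _ _
    | zero => exact B.zero_mem
    | add M N _ _ hM hN => exact B.add_mem hM hN
    | smul t M _ hM => exact B.smul_mem t hM
  · rw [eq_sum_submatrix_kronecker_single M]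
    exact Submodule.sum_mem _ fun a _ => Submodule.sum_mem _ fun c _ =>
      kronecker_mem_blockBlowUp (h a c) _

lemma submatrix_mem_blockBlowUp {ι ι' : Type*} [Finite κ] [Finite κ'] [Finite ι] [Finite ι']
    {M : Matrix (m × κ) (n × κ') R} (hM : M ∈ blockBlowUp B κ κ') (f : ι → κ) (g : ι' → κ') :
    M.submatrix (Prod.map id f) (Prod.map id g) ∈ blockBlowUp B ι ι' :=
  mem_blockBlowUp_iff.2 fun a c => mem_blockBlowUp_iff.1 hM (f a) (g c)

lemma submatrix_assoc_mem_blockBlowUp {ι ι' : Type*} [Finite κ] [Finite κ'] [Finite ι] [Finite ι']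
    {M : Matrix ((m × κ) × ι) ((n × κ') × ι') R}
    (hM : M ∈ blockBlowUp (blockBlowUp B κ κ') ι ι') :
    M.submatrix (Equiv.prodAssoc m κ ι).symm (Equiv.prodAssoc n κ' ι').symm ∈
      blockBlowUp B (κ × ι) (κ' × ι') :=
  mem_blockBlowUp_iff.2 fun a c =>
    mem_blockBlowUp_iff.1 (mem_blockBlowUp_iff.1 hM a.2 c.2) a.1 c.1

lemma kronecker_single_mulVec [Fintype n] [DecidableEq κ] [Fintype κ'] [DecidableEq κ']
    (A : Matrix m n R) (a : κ) (c : κ') (v : n × κ' → R) :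
    (A ⊗ₖ single a c (1 : R)) *ᵥ v =
      fun x => if x.2 = a then (A *ᵥ fun j => v (j, c)) x.1 else 0 := by
  ext ⟨i, b⟩
  rcases eq_or_ne b a with rfl | hb
  · simp [mulVec, dotProduct, Fintype.sum_prod_type, single_apply]
  · simp [mulVec, dotProduct, hb, hb.symm]

lemma kronecker_one_mulVec [Fintype n] [Fintype κ] [DecidableEq κ] (A : Matrix m n R)
    (v : n × κ → R) :
    (A ⊗ₖ (1 : Matrix κ κ R)) *ᵥ v = fun x => (A *ᵥ fun j => v (j, x.2)) x.1 := by
  ext ⟨i, b⟩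
  simp [mulVec, dotProduct, Fintype.sum_prod_type, one_apply]

end BlowUp

section ImageSpan

variable {R m n κ κ' : Type*} [CommSemiring R]

/-- The vectors of `Rⁿ ⊗ R^κ` all of whose slices lie in `U`. -/
def blockSubmodule (U : Submodule R (n → R)) (κ : Type*) : Submodule R (n × κ → R) where
  carrier := {v | ∀ a, (fun i => v (i, a)) ∈ U}
  add_mem' hv hw a := U.add_mem (hv a) (hw a)
  zero_mem' _ := U.zero_mem
  smul_mem' t _ hv a := U.smul_mem t (hv a)

/-- The span of the slices of the elements of `S`, that is, the smallest `U` with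
`S ≤ blockSubmodule U κ`. -/
def sliceSpan (S : Submodule R (n × κ → R)) : Submodule R (n → R) :=
  Submodule.span R {u | ∃ v ∈ S, ∃ a, u = fun i => v (i, a)}

lemma le_blockSubmodule_sliceSpan (S : Submodule R (n × κ → R)) :
    S ≤ blockSubmodule (sliceSpan S) κ :=
  fun v hv a => Submodule.subset_span ⟨v, hv, a, rfl⟩

variable [Fintype n]

/-- The span of the images `A *ᵥ u` with `A ∈ B` and `u ∈ U`, denoted `B(U)` on paper. -/
def imageSpan (B : Submodule R (Matrix m n R)) (U : Submodule R (n → R)) : Submodule R (m → R) :=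
  Submodule.span R {v | ∃ A ∈ B, ∃ u ∈ U, v = A.mulVec u}

variable {B : Submodule R (Matrix m n R)}

lemma mulVec_mem_blockSubmodule [Finite κ] [Fintype κ'] {M : Matrix (m × κ) (n × κ') R}
    (hM : M ∈ blockBlowUp B κ κ') {U : Submodule R (n → R)} {v : n × κ' → R}
    (hv : v ∈ blockSubmodule U κ') : M *ᵥ v ∈ blockSubmodule (imageSpan B U) κ := by
  intro a
  have hslice : (fun i => (M *ᵥ v) (i, a)) =
      ∑ c, M.submatrix (·, a) (·, c) *ᵥ fun j => v (j, c) := by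
    ext i
    simp only [mulVec, dotProduct, Finset.sum_apply, Fintype.sum_prod_type, submatrix_apply]
    exact Finset.sum_comm
  rw [hslice]
  exact Submodule.sum_mem _ fun c _ =>
    Submodule.subset_span ⟨_, mem_blockBlowUp_iff.1 hM a c, _, hv c, rfl⟩

/-- The matrix `A ⊗ₖ single a c 1` applies `A` to the slice `c` and moves the result to the slice
`a`, so the image under the blow-up only depends on the span of all slices. -/
lemma blockSubmodule_imageSpan_sliceSpan_le [Finite κ] [Fintype κ']
    (B : Submodule R (Matrix m n R)) (S : Submodule R (n × κ' → R)) :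
    blockSubmodule (imageSpan B (sliceSpan S)) κ ≤ imageSpan (blockBlowUp B κ κ') S := by
  classical
  cases nonempty_fintype κ
  let inBlock (a : κ) : (m → R) →ₗ[R] (m × κ → R) :=
    LinearMap.pi fun x => if x.2 = a then LinearMap.proj x.1 else 0
  have hinBlock : ∀ a u, inBlock a u = fun x => if x.2 = a then u x.1 else 0 := fun a u => by
    ext x
    simp only [inBlock, LinearMap.pi_apply]
    split_ifs <;> rfl
  have hmem : ∀ a, imageSpan B (sliceSpan S) ≤
      (imageSpan (blockBlowUp B κ κ') S).comap (inBlock a) := fun a => by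
    refine Submodule.span_le.2 ?_
    rintro _ ⟨A, hA, u, hu, rfl⟩
    suffices h : sliceSpan S ≤
        (imageSpan (blockBlowUp B κ κ') S).comap (inBlock a ∘ₗ A.mulVecLin) from h hu
    refine Submodule.span_le.2 ?_
    rintro _ ⟨v, hv, c, rfl⟩
    refine Submodule.subset_span ⟨_, kronecker_mem_blockBlowUp hA (single a c 1), v, hv, ?_⟩
    rw [kronecker_single_mulVec, LinearMap.comp_apply, mulVecLin_apply, hinBlock]
  intro v hv
  have hsum : v = ∑ a, inBlock a fun i => v (i, a) := by
    ext ⟨i, b⟩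
    simp [hinBlock, Finset.sum_apply]
  rw [hsum]
  exact Submodule.sum_mem _ fun a _ => hmem a (hv a)

end ImageSpan

section UpperBound

variable {F m n κ : Type*} [Field F]

lemma finrank_blockSubmodule [Finite n] (U : Submodule F (n → F)) (κ : Type*) [Fintype κ] :
    Module.finrank F (blockSubmodule U κ) = Fintype.card κ * Module.finrank F U := by
  let ε : blockSubmodule U κ ≃ₗ[F] (κ → U) :=
    { toFun := fun v a => ⟨fun i => v.1 (i, a), v.2 a⟩
      invFun := fun u => ⟨fun x => (u x.2).1 x.1, fun a => (u a).2⟩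
      map_add' := fun _ _ => rfl
      map_smul' := fun _ _ => rfl }
  rw [ε.finrank_eq, Module.finrank_pi_fintype, Finset.sum_const, Finset.card_univ, smul_eq_mul]

lemma finrank_range_add_finrank_le {V W : Type*} [AddCommGroup V] [Module F V]
    [AddCommGroup W] [Module F W] [FiniteDimensional F V] (f : V →ₗ[F] W) (S : Submodule F V) :
    Module.finrank F (LinearMap.range f) + Module.finrank F S ≤
      Module.finrank F (S.map f) + Module.finrank F V := by
  have hf := f.finrank_range_add_finrank_ker
  have hfS := (f.domRestrict S).finrank_range_add_finrank_ker
  rw [LinearMap.range_domRestrict, LinearMap.ker_domRestrict] at hfS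
  have hker : Module.finrank F ((LinearMap.ker f).comap S.subtype) ≤
      Module.finrank F (LinearMap.ker f) := by
    rw [← Submodule.finrank_map_subtype_eq]
    exact Submodule.finrank_mono (Submodule.map_comap_le _ _)
  omega

lemma rank_add_le_of_mem_blockBlowUp [Finite m] [Fintype n] [Fintype κ]
    {B : Submodule F (Matrix m n F)} {M : Matrix (m × κ) (n × κ) F} (hM : M ∈ blockBlowUp B κ κ)
    {U : Submodule F (n → F)} {s : ℕ}
    (hU : Module.finrank F (imageSpan B U) + s ≤ Module.finrank F U) :
    M.rank + s * Fintype.card κ ≤ Fintype.card n * Fintype.card κ := by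
  have himage : (blockSubmodule U κ).map M.mulVecLin ≤ blockSubmodule (imageSpan B U) κ := by
    rintro _ ⟨v, hv, rfl⟩
    exact mulVec_mem_blockSubmodule hM hv
  have hle := finrank_range_add_finrank_le M.mulVecLin (blockSubmodule U κ)
  have himage_le := Submodule.finrank_mono himage
  rw [finrank_blockSubmodule] at hle himage_le
  rw [Module.finrank_fintype_fun_eq_card, Fintype.card_prod] at hle
  have hmul := Nat.mul_le_mul_left (Fintype.card κ) hU
  change M.rank + _ ≤ _ at hle
  linarith

end UpperBound

section Specialization

variable {K m n : Type*} [Field K] [Finite m] [Fintype n]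

lemma exists_linearIndependent_col_submatrix (A : Matrix m n K) {k : ℕ} (hk : A.rank = k) :
    ∃ g : Fin k → n, LinearIndependent K (A.submatrix id g).col := by
  subst hk
  rw [rank_eq_finrank_span_cols]
  obtain ⟨v, hv, -, hindep⟩ := Submodule.exists_fun_fin_finrank_span_eq K (Set.range A.col)
  choose g hg using hv
  exact ⟨g, by rwa [← funext hg] at hindep⟩

lemma exists_det_submatrix_ne_zero (A : Matrix m n K) :
    ∃ (f : Fin A.rank → m) (g : Fin A.rank → n), (A.submatrix f g).det ≠ 0 := by
  cases nonempty_fintype m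
  obtain ⟨g, hg⟩ := exists_linearIndependent_col_submatrix A rfl
  have hrank : (A.submatrix id g)ᵀ.rank = A.rank := by
    rw [rank_transpose, rank_eq_finrank_span_cols, finrank_span_eq_card hg, Fintype.card_fin]
  obtain ⟨f, hf⟩ := exists_linearIndependent_col_submatrix _ hrank
  refine ⟨f, g, ?_⟩
  rw [← det_transpose, ← isUnit_iff_ne_zero, ← isUnit_iff_isUnit_det]
  exact linearIndependent_cols_iff_isUnit.1 hf

lemma rank_map_ringHom_le {P : Type*} [CommRing P] [IsDomain P] (φ : P →+* K) (G : Matrix m n P) :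
    (G.map φ).rank ≤ G.rank := by
  obtain ⟨f, g, hfg⟩ := exists_det_submatrix_ne_zero (G.map φ)
  have hdet : (G.submatrix f g).det ≠ 0 := fun h0 => hfg <| by
    rw [submatrix_map, ← RingHom.mapMatrix_apply, ← RingHom.map_det, h0, map_zero]
  have hle := G.rank_submatrix_le f g
  rwa [rank_of_det_ne_zero hdet, Fintype.card_fin] at hle

end Specialization

section Regularity

open MvPolynomial Fin.CommRing

section GenericBlowUp

variable {R ι m n : Type*} [CommRing R] {e : ℕ}

/-- The endomorphism of the generic coefficients that shifts the inner indices cyclically. -/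
noncomputable def shiftVariables (R ι : Type*) [CommRing R] (e : ℕ) :
    MvPolynomial (Option (ι × Fin (e + 1) × Fin (e + 1))) R →+*
      MvPolynomial (Option (ι × Fin (e + 1) × Fin (e + 1))) R :=
  (rename (Option.map fun v => (v.1, v.2.1 - 1, v.2.2 - 1))).toRingHom

lemma degreeOf_none_shiftVariables
    (q : MvPolynomial (Option (ι × Fin (e + 1) × Fin (e + 1))) R) :
    degreeOf none (shiftVariables R ι e q) = degreeOf none q :=
  degreeOf_rename_of_injective (f := Option.map fun v : ι × Fin (e + 1) × Fin (e + 1) =>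
    (v.1, v.2.1 - 1, v.2.2 - 1)) (Option.map_injective fun u v huv => by
      simpa [Prod.ext_iff] using huv) none

variable [Fintype ι]

/-- The generic matrix of the blow-up of the span of the matrices `b l`: the coefficient of
`b l ⊗ₖ single a c 1` is the variable `some (l, a, c)`, multiplied by the variable `none` below the
diagonal to make the generic matrix twisted. -/
noncomputable def genericBlowUp (b : ι → Matrix m n R) (e : ℕ) :
    Matrix (m × Fin (e + 1)) (n × Fin (e + 1))
      (MvPolynomial (Option (ι × Fin (e + 1) × Fin (e + 1))) R) :=
  fun x y => (∑ l, X (some (l, x.2, y.2)) * C (b l x.1 y.1)) * if y.2 < x.2 then X none else 1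

lemma isTwisted_genericBlowUp (b : ι → Matrix m n R) (e : ℕ) :
    IsTwisted (shiftVariables R ι e) (Equiv.addRight 1) (wrapWeight R none e)
      (genericBlowUp b e) := by
  intro i a j c
  simp only [genericBlowUp, shiftVariables, Equiv.coe_addRight, map_mul, map_sum,
    AlgHom.toRingHom_eq_coe, RingHom.coe_coe, rename_X, rename_C, Option.map_some,
    add_sub_cancel_right]
  rw [mul_left_comm, mul_assoc]
  congr 1
  have hlt : ∀ x : Fin (e + 1), x ≠ Fin.last e → x.val < e := fun x hx =>
    Fin.val_lt_last hx
  simp only [wrapWeight, Fin.lt_def, Fin.val_add_one]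
  by_cases ha : a = Fin.last e <;> by_cases hc : c = Fin.last e
  · simp [ha, hc]
  · simp [ha, hc, hlt c hc]
  · simp [ha, hc, (hlt a ha).le]
  · by_cases hca : c.val < a.val <;> simp [ha, hc, hca]

lemma degreeOf_genericBlowUp_le [Nontrivial R] (b : ι → Matrix m n R)
    (v : Option (ι × Fin (e + 1) × Fin (e + 1))) (x : m × Fin (e + 1)) (y : n × Fin (e + 1)) :
    degreeOf v (genericBlowUp b e x y) ≤ 1 := by
  classical
  have hsum : degreeOf v (∑ l, X (some (l, x.2, y.2)) * C (b l x.1 y.1) : MvPolynomial _ R) ≤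
      if v = none then 0 else 1 := by
    refine (degreeOf_sum_le _ _ _).trans (Finset.sup_le fun l _ => ?_)
    refine (degreeOf_mul_C_le _ _ _).trans ?_
    rw [degreeOf_X]
    split_ifs <;> simp_all
  have hwrap : degreeOf v (if y.2 < x.2 then X none else 1 : MvPolynomial _ R) ≤
      if v = none then 1 else 0 := by
    rw [apply_ite (degreeOf v), degreeOf_X, degreeOf_one]
    split_ifs <;> simp
  refine (degreeOf_mul_le _ _ _).trans ((add_le_add hsum hwrap).trans ?_)
  split_ifs <;> rfl

lemma map_eval_genericBlowUp_mem_blockBlowUp {B : Submodule R (Matrix m n R)}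
    {b : ι → Matrix m n R} (hb : ∀ l, b l ∈ B)
    (t : Option (ι × Fin (e + 1) × Fin (e + 1)) → R) :
    (genericBlowUp b e).map (eval t) ∈ blockBlowUp B (Fin (e + 1)) (Fin (e + 1)) := by
  refine mem_blockBlowUp_iff.2 fun a c => ?_
  have hslice : ((genericBlowUp b e).map (eval t)).submatrix (·, a) (·, c) =
      (if c < a then t none else 1) • ∑ l, t (some (l, a, c)) • b l := by
    ext i j
    simp only [genericBlowUp, submatrix_apply, map_apply, map_mul, map_sum, eval_X, eval_C,
      apply_ite (eval t), map_one, Matrix.smul_apply, Matrix.sum_apply, smul_eq_mul]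
    exact mul_comm _ _
  rw [hslice]
  exact B.smul_mem _ (B.sum_mem fun l _ => B.smul_mem _ (hb l))

end GenericBlowUp

lemma exists_map_eval_genericBlowUp_eq {R m n : Type*} [CommRing R] {e : ℕ}
    (A : Matrix (m × Fin (e + 1)) (n × Fin (e + 1)) R) :
    ∃ t, (genericBlowUp (fun l : Fin (e + 1) × Fin (e + 1) =>
      A.submatrix (·, l.1) (·, l.2)) e).map (eval t) = A := by
  refine ⟨fun v => v.elim 1 fun u => if u.1 = u.2 then 1 else 0, ?_⟩
  ext ⟨i, a⟩ ⟨j, c⟩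
  simp [genericBlowUp, apply_ite (eval _)]

/-- The regularity lemma of Ivanyos, Qiao and Subrahmanyam. -/
theorem exists_nonsingular_blockSubmatrix_of_mem_blockBlowUp {F m n : Type*} [Field F] [Finite m]
    [Fintype n] {B : Submodule F (Matrix m n F)} {d : ℕ} (hd : 0 < d)
    (hF : ((Fintype.card n * d + 1 : ℕ) : Cardinal) ≤ Cardinal.mk F)
    {A : Matrix (m × Fin d) (n × Fin d) F} (hA : A ∈ blockBlowUp B (Fin d) (Fin d)) :
    ∃ A' ∈ blockBlowUp B (Fin d) (Fin d), ∃ (k : ℕ) (f : Fin k → m) (g : Fin k → n),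
      (blockSubmatrix A' f g).det ≠ 0 ∧ A.rank ≤ k * d := by
  obtain ⟨e, rfl⟩ := Nat.exists_eq_add_one_of_ne_zero hd.ne'
  let b (l : Fin (e + 1) × Fin (e + 1)) : Matrix m n F := A.submatrix (·, l.1) (·, l.2)
  obtain ⟨k, f, g, hdet, hrank⟩ := (isTwisted_genericBlowUp b e).exists_nonsingular_blockSubmatrix
    wrapWeight_ne_zero fun N hN => hN.det_ne_zero degreeOf_none_shiftVariables
  rw [Fintype.card_fin] at hrank
  have hk := (mul_card_le_rank_of_det_blockSubmatrix_ne_zero hdet).trans (rank_le_card_width _)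
  rw [Fintype.card_prod, Fintype.card_fin] at hk
  have hdeg : ∀ v, degreeOf v (blockSubmatrix (genericBlowUp b e) f g).det ≤
      Fintype.card n * (e + 1) := fun v =>
    (degreeOf_det_le fun x y => degreeOf_genericBlowUp_le b v _ _).trans (by simpa using hk)
  obtain ⟨t, ht⟩ := exists_eval_ne_zero_of_degreeOf_le hF hdet hdeg
  obtain ⟨t₀, ht₀⟩ := exists_map_eval_genericBlowUp_eq A
  have hb : ∀ l, b l ∈ B := fun l => mem_blockBlowUp_iff.1 hA l.1 l.2
  refine ⟨_, map_eval_genericBlowUp_mem_blockBlowUp hb t, k, f, g, ?_, ?_⟩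
  · rwa [RingHom.map_det] at ht
  · rw [← ht₀]
    exact (rank_map_ringHom_le (eval t₀) _).trans hrank

end Regularity

section Deletion

variable {K m n : Type*} [Field K]

lemma rank_le_rank_submatrix_cols_add [Finite m] [Fintype n] {n₀ n₁ : Type*} [Fintype n₀]
    [Fintype n₁] (M : Matrix m n K) {g₀ : n₀ → n} {g₁ : n₁ → n}
    (hg : ∀ y, y ∈ Set.range g₀ ∨ y ∈ Set.range g₁) :
    M.rank ≤ (M.submatrix id g₀).rank + Fintype.card n₁ := by
  have hspan : Submodule.span K (Set.range M.col) ≤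
      Submodule.span K (Set.range (M.submatrix id g₀).col) ⊔
        Submodule.span K (Set.range (M.submatrix id g₁).col) := by
    rw [Submodule.span_le]
    rintro _ ⟨y, rfl⟩
    rcases hg y with ⟨z, rfl⟩ | ⟨z, rfl⟩
    · exact Submodule.mem_sup_left (Submodule.subset_span ⟨z, rfl⟩)
    · exact Submodule.mem_sup_right (Submodule.subset_span ⟨z, rfl⟩)
  have hrank := (Submodule.finrank_mono hspan).trans
    (Submodule.finrank_add_le_finrank_add_finrank _ _)
  simp only [← rank_eq_finrank_span_cols] at hrank
  exact hrank.trans (Nat.add_le_add_left (rank_le_card_width _) _)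

lemma rank_le_rank_submatrix_rows_add [Finite m] [Fintype n] {m₀ m₁ : Type*} [Finite m₀]
    [Fintype m₁] (M : Matrix m n K) {f₀ : m₀ → m} {f₁ : m₁ → m}
    (hf : ∀ x, x ∈ Set.range f₀ ∨ x ∈ Set.range f₁) :
    M.rank ≤ (M.submatrix f₀ id).rank + Fintype.card m₁ := by
  cases nonempty_fintype m
  cases nonempty_fintype m₀
  rw [← M.rank_transpose, ← (M.submatrix f₀ id).rank_transpose, transpose_submatrix]
  exact rank_le_rank_submatrix_cols_add Mᵀ hf

lemma mem_range_map_castSucc_or {ι : Type*} {d : ℕ} (x : ι × Fin (d + 1)) :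
    x ∈ Set.range (Prod.map (id : ι → ι) Fin.castSucc) ∨
      x ∈ Set.range fun i : ι => (i, Fin.last d) := by
  obtain ⟨i, a⟩ := x
  induction a using Fin.lastCases with
  | last => exact Or.inr ⟨i, rfl⟩
  | cast a => exact Or.inl ⟨(i, a), rfl⟩

lemma rank_le_rank_submatrix_castSucc_add [Fintype m] [Fintype n] {d : ℕ}
    (M : Matrix (m × Fin (d + 1)) (n × Fin (d + 1)) K) :
    M.rank ≤ (M.submatrix (Prod.map id Fin.castSucc) (Prod.map id Fin.castSucc)).rank +
      (Fintype.card m + Fintype.card n) := by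
  have hcols := rank_le_rank_submatrix_cols_add M mem_range_map_castSucc_or
  have hrows := rank_le_rank_submatrix_rows_add (M.submatrix id (Prod.map id Fin.castSucc))
    mem_range_map_castSucc_or
  rw [submatrix_submatrix, Function.id_comp, Function.comp_id] at hrows
  omega

end Deletion

section ChainSpace

open Module

variable {K V W : Type*} [Field K] [AddCommGroup V] [Module K V] [AddCommGroup W] [Module K W]

/-- The chains of length `L` of `f` along `X`: the sequences `w` of `L + 1` vectors with
`f (w 0) = 0` and `f (w (i + 1)) = X i (w i)`. -/
def chainSpace (f : V →ₗ[K] W) (X : ℕ → V →ₗ[K] W) (L : ℕ) : Submodule K (Fin (L + 1) → V) where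
  carrier := {w | f (w 0) = 0 ∧ ∀ i : Fin L, f (w i.succ) = X i (w i.castSucc)}
  add_mem' hu hv := ⟨by simp [hu.1, hv.1], fun i => by simp [hu.2 i, hv.2 i]⟩
  zero_mem' := by simp
  smul_mem' t _ hu := ⟨by simp [hu.1], fun i => by simp [hu.2 i]⟩

/-- The chain obtained by dropping the last vector; its surjectivity says that every chain of length
`L` can be extended. -/
def chainInit (f : V →ₗ[K] W) (X : ℕ → V →ₗ[K] W) (L : ℕ) :
    chainSpace f X (L + 1) →ₗ[K] chainSpace f X L where
  toFun w := ⟨Fin.init w.1, w.2.1, fun i => w.2.2 i.castSucc⟩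
  map_add' _ _ := rfl
  map_smul' _ _ := rfl

/-- `x` is the last vector of a chain of length `j` along maps taken from `𝒳`. The spans of these
vectors play the role of the second Wong sequence of `f` and `𝒳`. -/
def IsChainEnd (f : V →ₗ[K] W) (𝒳 : Set (V →ₗ[K] W)) (j : ℕ) (x : V) : Prop :=
  ∃ X : ℕ → V →ₗ[K] W, (∀ i, X i ∈ 𝒳) ∧ ∃ w ∈ chainSpace f X j, w (Fin.last j) = x

lemma IsChainEnd.exists_succ {f : V →ₗ[K] W} {𝒳 : Set (V →ₗ[K] W)} {j : ℕ} {x : V}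
    (hx : IsChainEnd f 𝒳 j x)
    (hsurj : ∀ X : ℕ → V →ₗ[K] W, (∀ i, X i ∈ 𝒳) → Function.Surjective (chainInit f X j))
    {Y : V →ₗ[K] W} (hY : Y ∈ 𝒳) : ∃ y, IsChainEnd f 𝒳 (j + 1) y ∧ f y = Y x := by
  obtain ⟨X, hX, w, hw, rfl⟩ := hx
  have hXY : ∀ i, Function.update X j Y i ∈ 𝒳 := fun i => by
    rcases eq_or_ne i j with rfl | hij
    · rwa [Function.update_self]
    · rw [Function.update_of_ne hij]
      exact hX i
  have hw' : w ∈ chainSpace f (Function.update X j Y) j :=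
    ⟨hw.1, fun i => by rw [Function.update_of_ne i.is_lt.ne, hw.2 i]⟩
  obtain ⟨z, hz⟩ := hsurj _ hXY ⟨w, hw'⟩
  refine ⟨z.1 (Fin.last (j + 1)), ⟨_, hXY, z.1, z.2, rfl⟩, ?_⟩
  have hstep := z.2.2 (Fin.last j)
  rw [Fin.val_last, Function.update_self] at hstep
  rw [← Fin.succ_last, hstep]
  exact congrArg Y (congrFun (congrArg Subtype.val hz) (Fin.last j))

variable [FiniteDimensional K V]

lemma finrank_chainSpace_succ_le (f : V →ₗ[K] W) (X : ℕ → V →ₗ[K] W) (L : ℕ) :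
    finrank K (chainSpace f X (L + 1)) ≤
      finrank K (LinearMap.range (chainInit f X L)) + finrank K (LinearMap.ker f) := by
  let final : LinearMap.ker (chainInit f X L) →ₗ[K] V :=
    LinearMap.proj (Fin.last (L + 1)) ∘ₗ Submodule.subtype _ ∘ₗ Submodule.subtype _
  have hinit : ∀ (w : LinearMap.ker (chainInit f X L)) (i : Fin (L + 1)), w.1.1 i.castSucc = 0 :=
    fun w i => congrFun (congrArg Subtype.val w.2) i
  have hfinal : ∀ w, final w ∈ LinearMap.ker f := fun w =>
    (w.1.2.2 (Fin.last L)).trans (by rw [hinit w, map_zero])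
  have hinj : Function.Injective (final.codRestrict _ hfinal) := by
    refine (injective_iff_map_eq_zero _).2 fun w hw => ?_
    ext i
    refine Fin.lastCases ?_ (hinit w) i
    exact congrArg Subtype.val hw
  rw [← (chainInit f X L).finrank_range_add_finrank_ker]
  exact Nat.add_le_add_left (LinearMap.finrank_le_finrank_of_injective hinj) _

lemma finrank_chainSpace_le (f : V →ₗ[K] W) (X : ℕ → V →ₗ[K] W) (L : ℕ) :
    finrank K (chainSpace f X L) ≤ (L + 1) * finrank K (LinearMap.ker f) := by
  induction L with
  | zero =>
    let start : chainSpace f X 0 →ₗ[K] LinearMap.ker f :=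
      (LinearMap.proj 0 ∘ₗ Submodule.subtype _).codRestrict _ fun w => w.2.1
    have hinj : Function.Injective start := fun u v huv => by
      ext i
      rw [Fin.fin_one_eq_zero i]
      exact congrArg Subtype.val huv
    simpa using LinearMap.finrank_le_finrank_of_injective hinj
  | succ L ih =>
    have hsucc := finrank_chainSpace_succ_le f X L
    have hrange := Submodule.finrank_le (LinearMap.range (chainInit f X L))
    rw [Nat.succ_mul]
    omega

lemma chainInit_surjective {f : V →ₗ[K] W} {X : ℕ → V →ₗ[K] W} {L : ℕ}
    (hL : (L + 1) * finrank K (LinearMap.ker f) ≤ finrank K (chainSpace f X L)) {j : ℕ}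
    (hj : j < L) : Function.Surjective (chainInit f X j) := by
  induction L with
  | zero => exact absurd hj j.not_lt_zero
  | succ L ih =>
    have hsucc := finrank_chainSpace_succ_le f X L
    have hrange := Submodule.finrank_le (LinearMap.range (chainInit f X L))
    have hle := finrank_chainSpace_le f X L
    rw [Nat.succ_mul] at hL
    rcases Nat.lt_succ_iff_lt_or_eq.1 hj with hj | rfl
    · exact ih (by omega) hj
    · exact LinearMap.range_eq_top.1 (Submodule.eq_top_of_finrank_eq (by omega))

lemma exists_eq_succ_of_monotone {S : ℕ → Submodule K V} (hS : Monotone S) :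
    ∃ j ≤ finrank K V, S j = S (j + 1) := by
  by_contra! hne
  have hlt : ∀ j ≤ finrank K V + 1, j ≤ finrank K (S j) := by
    intro j hj
    induction j with
    | zero => exact Nat.zero_le _
    | succ j ih =>
      have hstrict := (hS j.le_succ).lt_of_ne (hne j (by omega))
      exact (ih (by omega)).trans_lt (Submodule.finrank_lt_finrank_of_lt hstrict)
  have hfinrank := (hlt _ le_rfl).trans (Submodule.finrank_le _)
  omega

lemma finrank_add_finrank_ker_le {f : V →ₗ[K] W} {S : Submodule K V} (hS : LinearMap.ker f ≤ S)
    {T : Submodule K W} (hT : T ≤ S.map f) :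
    finrank K T + finrank K (LinearMap.ker f) ≤ finrank K S := by
  have hrank := (f.domRestrict S).finrank_range_add_finrank_ker
  rw [LinearMap.range_domRestrict, LinearMap.ker_domRestrict,
    (Submodule.comapSubtypeEquivOfLe hS).finrank_eq] at hrank
  have hle := Submodule.finrank_mono hT
  omega

/-- Chains as plentiful as possible can always be extended, so the limit `S` of the spans of their
last vectors contains the kernel of `f` and satisfies `𝒳(S) ≤ f(S)`. -/
theorem exists_finrank_span_add_finrank_ker_le (f : V →ₗ[K] W) {𝒳 : Set (V →ₗ[K] W)}
    (h𝒳 : 𝒳.Nonempty)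
    (hchain : ∀ X : ℕ → V →ₗ[K] W, (∀ i, X i ∈ 𝒳) →
      (finrank K V + 2) * finrank K (LinearMap.ker f) ≤
        finrank K (chainSpace f X (finrank K V + 1))) :
    ∃ S : Submodule K V, finrank K (Submodule.span K {y | ∃ Y ∈ 𝒳, ∃ x ∈ S, y = Y x}) +
      finrank K (LinearMap.ker f) ≤ finrank K S := by
  let S (j : ℕ) : Submodule K V := Submodule.span K {x | ∃ i ≤ j, IsChainEnd f 𝒳 i x}
  have hmono : Monotone S := fun i j hij =>
    Submodule.span_mono fun x ⟨l, hl, hx⟩ => ⟨l, hl.trans hij, hx⟩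
  obtain ⟨j, hj, hstable⟩ := exists_eq_succ_of_monotone hmono
  have hker : LinearMap.ker f ≤ S j := fun x hx => by
    obtain ⟨Z, hZ⟩ := h𝒳
    exact Submodule.subset_span
      ⟨0, j.zero_le, fun _ => Z, fun _ => hZ, fun _ => x, ⟨hx, fun i => i.elim0⟩, rfl⟩
  refine ⟨S j, finrank_add_finrank_ker_le hker (Submodule.span_le.2 ?_)⟩
  rintro _ ⟨Y, hY, x, hx, rfl⟩
  suffices hY : S j ≤ ((S j).map f).comap Y from hY hx
  refine Submodule.span_le.2 fun x ⟨i, hi, hx⟩ => ?_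
  obtain ⟨y, hy, hyx⟩ := hx.exists_succ
    (fun X hX => chainInit_surjective (hchain X hX) (by omega)) hY
  refine ⟨y, ?_, hyx⟩
  rw [SetLike.mem_coe, hstable]
  exact Submodule.subset_span ⟨i + 1, Nat.succ_le_succ hi, hy⟩

end ChainSpace

section ChainMatrix

variable {K m n : Type*} [Field K]

/-- The matrix `A ⊗ 1 - ∑ X i ⊗ E_{i+1,i}`, whose kernel is the space of chains of `A` along `X`. -/
def chainMatrix (A : Matrix m n K) (X : ℕ → Matrix m n K) (L : ℕ) :
    Matrix (m × Fin (L + 1)) (n × Fin (L + 1)) K :=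
  A ⊗ₖ 1 - ∑ i : Fin L, X i ⊗ₖ single i.succ i.castSucc 1

lemma chainMatrix_mem_blockBlowUp {B : Submodule K (Matrix m n K)} {A : Matrix m n K}
    (hA : A ∈ B) {X : ℕ → Matrix m n K} (hX : ∀ i, X i ∈ B) (L : ℕ) :
    chainMatrix A X L ∈ blockBlowUp B (Fin (L + 1)) (Fin (L + 1)) :=
  Submodule.sub_mem _ (kronecker_mem_blockBlowUp hA _)
    (Submodule.sum_mem _ fun i _ => kronecker_mem_blockBlowUp (hX i) _)

variable [Fintype n]

lemma chainMatrix_mulVec (A : Matrix m n K) (X : ℕ → Matrix m n K) (L : ℕ)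
    (v : n × Fin (L + 1) → K) (x : m × Fin (L + 1)) :
    (chainMatrix A X L *ᵥ v) x = (A *ᵥ fun j => v (j, x.2)) x.1 -
      ∑ i : Fin L, if x.2 = i.succ then (X i *ᵥ fun j => v (j, i.castSucc)) x.1 else 0 := by
  rw [chainMatrix, sub_mulVec, Matrix.sum_mulVec, kronecker_one_mulVec]
  simp only [kronecker_single_mulVec, Pi.sub_apply, Finset.sum_apply]

lemma slices_mem_chainSpace {A : Matrix m n K} {X : ℕ → Matrix m n K} {L : ℕ}
    {v : n × Fin (L + 1) → K} (hv : chainMatrix A X L *ᵥ v = 0) :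
    (fun a j => v (j, a)) ∈ chainSpace A.mulVecLin (fun i => (X i).mulVecLin) L := by
  have hzero : ∀ i a, (A *ᵥ fun j => v (j, a)) i =
      ∑ l : Fin L, if a = l.succ then (X l *ᵥ fun j => v (j, l.castSucc)) i else 0 := fun i a =>
    sub_eq_zero.1 ((chainMatrix_mulVec A X L v (i, a)).symm.trans (congrFun hv (i, a)))
  refine ⟨funext fun i => ?_, fun l => funext fun i => ?_⟩
  · simpa [Fin.succ_ne_zero, eq_comm] using hzero i 0
  · simpa [Fin.succ_inj] using hzero i l.succ

lemma finrank_ker_chainMatrix_le (A : Matrix m n K) (X : ℕ → Matrix m n K) (L : ℕ) :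
    Module.finrank K (LinearMap.ker (chainMatrix A X L).mulVecLin) ≤
      Module.finrank K (chainSpace A.mulVecLin (fun i => (X i).mulVecLin) L) := by
  let slices : LinearMap.ker (chainMatrix A X L).mulVecLin →ₗ[K]
      chainSpace A.mulVecLin (fun i => (X i).mulVecLin) L :=
    { toFun := fun v => ⟨fun a j => v.1 (j, a), slices_mem_chainSpace v.2⟩
      map_add' := fun _ _ => rfl
      map_smul' := fun _ _ => rfl }
  refine LinearMap.finrank_le_finrank_of_injective (f := slices) fun u v huv => ?_
  ext ⟨j, a⟩
  exact congrFun (congrFun (congrArg Subtype.val huv) a) j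

lemma rank_add_finrank_ker_mulVecLin (A : Matrix m n K) :
    A.rank + Module.finrank K (LinearMap.ker A.mulVecLin) = Fintype.card n := by
  rw [Matrix.rank, LinearMap.finrank_range_add_finrank_ker, Module.finrank_fintype_fun_eq_card]

/-- The rank bound, applied to chain matrices, says that chains of `A` are as plentiful as
possible. -/
theorem exists_finrank_imageSpan_add_card_le [Finite m] {B : Submodule K (Matrix m n K)}
    {A : Matrix m n K} (hA : A ∈ B)
    (hrank : ∀ M ∈ blockBlowUp B (Fin (Fintype.card n + 2)) (Fin (Fintype.card n + 2)),
      M.rank ≤ (Fintype.card n + 2) * A.rank) :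
    ∃ S : Submodule K (n → K),
      Module.finrank K (imageSpan B S) + Fintype.card n ≤ Module.finrank K S + A.rank := by
  have hAker := rank_add_finrank_ker_mulVecLin A
  obtain ⟨S, hS⟩ := exists_finrank_span_add_finrank_ker_le A.mulVecLin
    (𝒳 := mulVecLin '' (B : Set (Matrix m n K))) ⟨_, A, hA, rfl⟩ fun Y hY => by
      choose X hX hXY using hY
      obtain rfl : (fun i => (X i).mulVecLin) = Y := funext hXY
      rw [Module.finrank_fintype_fun_eq_card]
      refine le_trans ?_ (finrank_ker_chainMatrix_le A X (Fintype.card n + 1))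
      have hker := rank_add_finrank_ker_mulVecLin (chainMatrix A X (Fintype.card n + 1))
      rw [Fintype.card_prod, Fintype.card_fin] at hker
      have hle := hrank _ (chainMatrix_mem_blockBlowUp hA hX (Fintype.card n + 1))
      have hmul := congrArg ((Fintype.card n + 2) * ·) hAker
      linarith
  have himage : imageSpan B S ≤
      Submodule.span K {y | ∃ Y ∈ mulVecLin '' (B : Set (Matrix m n K)), ∃ x ∈ S, y = Y x} :=
    Submodule.span_mono fun _ ⟨A', hA', x, hx, hy⟩ => ⟨_, ⟨A', hA', rfl⟩, x, hx, hy⟩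
  have hle := Submodule.finrank_mono himage
  exact ⟨S, by omega⟩

end ChainMatrix

section AttainsRank

open Cardinal Module

variable {F m n : Type*} [Field F] [Fintype n]

/-- The `(d, d)`-blow-up of `B` contains a matrix of rank at least `k * d`. -/
def AttainsRank (B : Submodule F (Matrix m n F)) (k d : ℕ) : Prop :=
  ∃ A ∈ blockBlowUp B (Fin d) (Fin d), k * d ≤ A.rank

variable [Finite m] {B : Submodule F (Matrix m n F)} {k d : ℕ}

lemma attainsRank_of_lt_rank_add {A : Matrix (m × Fin d) (n × Fin d) F}
    (hA : A ∈ blockBlowUp B (Fin d) (Fin d)) (hd : 0 < d)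
    (hF : ((Fintype.card n * d + 1 : ℕ) : Cardinal) ≤ #F) (hk : k * d < A.rank + d) :
    AttainsRank B k d := by
  obtain ⟨A', hA', l, f, g, hdet, hl⟩ :=
    exists_nonsingular_blockSubmatrix_of_mem_blockBlowUp hd hF hA
  have hkl : k ≤ l := by
    refine Nat.lt_succ_iff.1 (lt_of_mul_lt_mul_right ?_ d.zero_le)
    rw [Nat.succ_mul]
    omega
  have hrank := mul_card_le_rank_of_det_blockSubmatrix_ne_zero hdet
  rw [Fintype.card_fin] at hrank
  exact ⟨A', hA', (Nat.mul_le_mul_right d hkl).trans hrank⟩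

/-- Deleting one index from each of the `l ≥ k` blocks of a nonsingular block submatrix leaves rank
at least `l * (d - 1)`, which rounds up to a multiple of `d` when `k < d`. -/
lemma AttainsRank.of_succ (h : AttainsRank B k (d + 1)) (hkd : k < d)
    (hF : ((Fintype.card n * (d + 1) + 1 : ℕ) : Cardinal) ≤ #F) : AttainsRank B k d := by
  obtain ⟨A, hA, hrank⟩ := h
  obtain ⟨A', hA', l, f, g, hdet, hl⟩ :=
    exists_nonsingular_blockSubmatrix_of_mem_blockBlowUp d.succ_pos hF hA
  have hkl : k ≤ l := Nat.le_of_mul_le_mul_right (hrank.trans hl) d.succ_pos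
  let A'' := A'.submatrix (Prod.map id Fin.castSucc) (Prod.map id Fin.castSucc)
  have hdeleted := rank_le_rank_submatrix_castSucc_add (blockSubmatrix A' f g)
  rw [rank_of_det_ne_zero hdet] at hdeleted
  simp only [Fintype.card_prod, Fintype.card_fin] at hdeleted
  have hsub : ((blockSubmatrix A' f g).submatrix (Prod.map id Fin.castSucc)
      (Prod.map id Fin.castSucc)).rank ≤ A''.rank :=
    A''.rank_submatrix_le (Prod.map f id) (Prod.map g id)
  have hd : 0 < d := hkd.pos
  refine attainsRank_of_lt_rank_add (submatrix_mem_blockBlowUp hA' Fin.castSucc Fin.castSucc) hd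
    (le_trans (Nat.cast_le.2 (by gcongr; exact d.le_succ)) hF) (?_ : k * d < A''.rank + d)
  obtain ⟨e, rfl⟩ := Nat.exists_eq_add_one_of_ne_zero hd.ne'
  have hle := Nat.mul_le_mul_right e hkl
  linarith

lemma AttainsRank.exists_le_succ (h : AttainsRank B k d) (hd : 0 < d)
    (hF : ((Fintype.card n * d + 1 : ℕ) : Cardinal) ≤ #F) :
    ∃ d', 0 < d' ∧ d' ≤ k + 1 ∧ AttainsRank B k d' := by
  induction d with
  | zero => exact absurd hd (lt_irrefl 0)
  | succ d ih =>
    rcases Nat.lt_or_ge k d with hkd | hdk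
    · exact ih (h.of_succ hkd hF) hkd.pos
        (le_trans (Nat.cast_le.2 (by gcongr; exact d.le_succ)) hF)
    · exact ⟨d + 1, hd, Nat.succ_le_succ hdk, h⟩

lemma exists_shrunk_of_forall_rank_le {A : Matrix (m × Fin d) (n × Fin d) F}
    (hA : A ∈ blockBlowUp B (Fin d) (Fin d)) (hd : 0 < d)
    (hrank : ∀ M ∈ blockBlowUp B (Fin d × Fin (Fintype.card n * d + 2))
      (Fin d × Fin (Fintype.card n * d + 2)), M.rank ≤ (Fintype.card n * d + 2) * A.rank) :
    ∃ (U : Submodule F (n → F)) (s : ℕ), finrank F (imageSpan B U) + s ≤ finrank F U ∧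
      Fintype.card n * d ≤ A.rank + s * d := by
  have hcard : Fintype.card (n × Fin d) = Fintype.card n * d := by
    rw [Fintype.card_prod, Fintype.card_fin]
  obtain ⟨S, hS⟩ := exists_finrank_imageSpan_add_card_le hA <| by
    rw [hcard]
    intro M hM
    have hle := hrank _ (submatrix_assoc_mem_blockBlowUp hM)
    rwa [rank_submatrix] at hle
  have himage := Submodule.finrank_mono (blockSubmodule_imageSpan_sliceSpan_le (κ := Fin d) B S)
  have hslice := Submodule.finrank_mono (le_blockSubmodule_sliceSpan S)
  rw [finrank_blockSubmodule, Fintype.card_fin] at himage hslice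
  have hwidth := rank_le_card_width A
  rw [hcard] at hS hwidth
  obtain ⟨s, hs⟩ := Nat.exists_eq_add_of_le
    (Nat.le_of_mul_le_mul_left (by omega :
      d * finrank F (imageSpan B (sliceSpan S)) ≤ d * finrank F (sliceSpan S)) hd)
  refine ⟨sliceSpan S, s, hs.ge, ?_⟩
  rw [hs] at hslice
  linarith

lemma AttainsRank.exists_succ {s : ℕ}
    (hs : ∀ U : Submodule F (n → F), ∀ s', finrank F (imageSpan B U) + s' ≤ finrank F U → s' ≤ s)
    (h : AttainsRank B k d) (hd : 0 < d) (hk : k < Fintype.card n - s)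
    (hF : ((Fintype.card n * (d * (Fintype.card n * d + 2)) + 1 : ℕ) : Cardinal) ≤ #F) :
    ∃ D, 0 < D ∧ D ≤ d * (Fintype.card n * d + 2) ∧ AttainsRank B (k + 1) D := by
  obtain ⟨A, hA, hAk⟩ := h
  set e := Fintype.card n * d + 2
  by_cases! hrank : ∀ M ∈ blockBlowUp B (Fin d × Fin e) (Fin d × Fin e), M.rank ≤ e * A.rank
  · obtain ⟨U, s', hU, hAs⟩ := exists_shrunk_of_forall_rank_le hA hd hrank
    have hks : k + 1 + s' ≤ Fintype.card n := by have := hs U s' hU; omega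
    have hmul := Nat.mul_le_mul_right d hks
    rw [Nat.add_mul] at hmul
    exact ⟨d, hd, Nat.le_mul_of_pos_right d (by omega), A, hA, by omega⟩
  · obtain ⟨M, hM, hlt⟩ := hrank
    have hM' := submatrix_mem_blockBlowUp hM finProdFinEquiv.symm finProdFinEquiv.symm
    refine ⟨d * e, by positivity, le_rfl,
      attainsRank_of_lt_rank_add hM' (by positivity) hF ?_⟩
    have hreindex : (M.submatrix (Prod.map id finProdFinEquiv.symm)
        (Prod.map id finProdFinEquiv.symm)).rank = M.rank :=
      rank_submatrix M ((Equiv.refl m).prodCongr finProdFinEquiv.symm)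
        ((Equiv.refl n).prodCongr finProdFinEquiv.symm)
    rw [hreindex]
    have hmul := Nat.mul_le_mul_left e hAk
    linarith

lemma exists_attainsRank {s : ℕ}
    (hs : ∀ U : Submodule F (n → F), ∀ s', finrank F (imageSpan B U) + s' ≤ finrank F U → s' ≤ s)
    (hk : k ≤ Fintype.card n - s)
    (hF : (((Fintype.card n ^ 2 + 1) ^ 2 : ℕ) : Cardinal) ≤ #F) :
    ∃ d, 0 < d ∧ d ≤ k + 1 ∧ AttainsRank B k d := by
  induction k with
  | zero => exact ⟨1, one_pos, le_rfl, 0, Submodule.zero_mem _, by simp⟩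
  | succ k ih =>
    obtain ⟨d, hd, hdk, h⟩ := ih (by omega)
    have hdn : d ≤ Fintype.card n := by omega
    have hbound :=
      calc Fintype.card n * (d * (Fintype.card n * d + 2)) + 1
        _ ≤ Fintype.card n * (Fintype.card n * (Fintype.card n * Fintype.card n + 2)) + 1 := by
          gcongr
        _ = (Fintype.card n ^ 2 + 1) ^ 2 := by ring
    have hFd := le_trans (Nat.cast_le.2 hbound) hF
    obtain ⟨D, hD, hDd, hDk⟩ := h.exists_succ hs hd (by omega) hFd
    exact hDk.exists_le_succ hD (le_trans (Nat.cast_le.2 (by gcongr)) hFd)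

end AttainsRank

theorem stmt0_general {F m n : Type*} [Field F] [Finite m] [Fintype n]
    (hF : (((Fintype.card n ^ 2 + 1) ^ 2 : ℕ) : Cardinal) ≤ Cardinal.mk F)
    (B : Submodule F (Matrix m n F)) {s r : ℕ}
    (hs : IsGreatest {s' : ℕ | ∃ U : Submodule F (n → F),
      Module.finrank F (imageSpan B U) + s' ≤ Module.finrank F U} s)
    (hr : r = Fintype.card n - s) :
    ∃ d : ℕ, 1 ≤ d ∧ d ≤ r + 1 ∧ ∃ A ∈ blockBlowUp B (Fin d) (Fin d), A.rank = r * d := by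
  subst hr
  obtain ⟨⟨U, hU⟩, hmax⟩ := hs
  obtain ⟨d, hd, hdr, A, hA, hle⟩ := exists_attainsRank (fun U s' hU => hmax ⟨U, hU⟩) le_rfl hF
  refine ⟨d, hd, hdr, A, hA, hle.antisymm' ?_⟩
  have hge := rank_add_le_of_mem_blockBlowUp hA hU
  rw [Fintype.card_fin] at hge
  rw [Nat.sub_mul]
  omega

/-- For every `n` there is `N` depending only on `n` such that over any field `F` with
`|F| ≥ N`, for any nonzero matrix space `B ≤ M(n,F)` of non-commutative rank
`r = n − s*` (where `s*` is the largest `s` such that `B` has an `s`-shrunk subspace),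
some blow-up `B^{(d,d)}` with `1 ≤ d ≤ r + 1` contains a matrix of rank `r·d`. -/
theorem stmt0 (n : ℕ) (hn : 0 < n) :
    ∃ N : ℕ, ∀ (F : Type) (_ : Field F),
      (N : Cardinal) ≤ Cardinal.mk F →
      ∀ (B : Submodule F (Matrix (Fin n) (Fin n) F)), B ≠ ⊥ →
      ∀ (s r : ℕ),
        IsGreatest {s' : ℕ | ∃ U : Submodule F (Fin n → F), IsShrunkSubspace B U s'} s →
        r = n - s →
        ∃ d : ℕ, 1 ≤ d ∧ d ≤ r + 1 ∧
          ∃ A ∈ blowUp B d d, A.rank = r * d := by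
  exact ⟨(n ^ 2 + 1) ^ 2, fun F _ hF B _ s r hs hr =>
    stmt0_general (by simpa using hF) B hs (by simpa using hr)⟩
end

section
/- Let F be a field, B ≤ M(n,F) a matrix space, and suppose U ≤ F^n is an s-shrunk subspace of B. Then for every positive integer d, every matrix A in the (d,d)-blow-up B^{(d,d)} has rank at most (n − s)d. -/
open Matrix Kronecker

/-! A blow-up matrix maps `U ⊗ F^d` into `B(U) ⊗ F^d`: it therefore sends a subspace of dimension
`d · dim U` into one of dimension at most `d · (dim U − s)`, and this loss of `d · s` dimensions
bounds its rank on the whole of `F^n ⊗ F^d`. -/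

section DivisionRing

variable {K E E' : Type*} [DivisionRing K] [AddCommGroup E] [Module K E] [AddCommGroup E']
  [Module K E']

theorem finrank_range_add_finrank_le_of_map_le [FiniteDimensional K E] (f : E →ₗ[K] E')
    {P : Submodule K E} {Q : Submodule K E'} [FiniteDimensional K Q] (h : P.map f ≤ Q) :
    Module.finrank K f.range + Module.finrank K P ≤ Module.finrank K E + Module.finrank K Q := by
  obtain ⟨C, hC⟩ := P.exists_isCompl
  have hrange : f.range = P.map f ⊔ C.map f := by
    rw [← Submodule.map_sup, hC.sup_eq_top, Submodule.map_top]
  have hsum : Module.finrank K f.range ≤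
      Module.finrank K (P.map f) + Module.finrank K (C.map f) :=
    hrange ▸ Submodule.finrank_add_le_finrank_add_finrank _ _
  have hP : Module.finrank K (P.map f) ≤ Module.finrank K Q := Submodule.finrank_mono h
  have hC' : Module.finrank K (C.map f) ≤ Module.finrank K C := Submodule.finrank_map_le f C
  have hPC := Submodule.finrank_add_eq_of_isCompl hC
  lia

end DivisionRing

section CommSemiring

variable {R m n ι κ : Type*} [CommSemiring R]

/-- The subspace `W ⊗ R^ι` of `R^n ⊗ R^ι`, the latter being encoded as `n × ι → R`: the vectors
all of whose slices along `ι` lie in `W`. -/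
def sliceSubmodule (W : Submodule R (n → R)) (ι : Type*) : Submodule R (n × ι → R) where
  carrier := {x | ∀ j, (fun i => x (i, j)) ∈ W}
  add_mem' hx hy j := W.add_mem (hx j) (hy j)
  zero_mem' _ := W.zero_mem
  smul_mem' c _ hx j := W.smul_mem c (hx j)

/-- The identification of `W ⊗ R^ι` with `W^ι`, sending a vector to the family of its slices. -/
def sliceSubmoduleEquiv (W : Submodule R (n → R)) (ι : Type*) :
    sliceSubmodule W ι ≃ₗ[R] (ι → W) where
  toFun x j := ⟨fun i => x.1 (i, j), x.2 j⟩
  map_add' _ _ := rfl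
  map_smul' _ _ := rfl
  invFun y := ⟨fun p => (y p.2).1 p.1, fun j => (y j).2⟩
  left_inv _ := rfl
  right_inv _ := rfl

theorem vec_mem_sliceSubmodule_iff {W : Submodule R (n → R)} {X : Matrix ι n R} :
    vec X ∈ sliceSubmodule W ι ↔ ∀ j, X j ∈ W :=
  Iff.rfl

variable [Fintype n] [Fintype ι] {U : Submodule R (n → R)} {W : Submodule R (m → R)}

theorem kronecker_mulVec_mem_sliceSubmodule {A : Matrix m n R} (hA : ∀ u ∈ U, A *ᵥ u ∈ W)
    (T : Matrix κ ι R) {x : n × ι → R} (hx : x ∈ sliceSubmodule U ι) :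
    (A ⊗ₖ T) *ᵥ x ∈ sliceSubmodule W κ := by
  obtain ⟨X, rfl⟩ := vec_bijective.surjective x
  rw [kronecker_mulVec_vec, vec_mem_sliceSubmodule_iff]
  intro j
  have hTX : (T * X) j ∈ U := by
    rw [mul_apply_eq_vecMul, vecMul_eq_sum]
    exact U.sum_mem fun l _ => U.smul_mem _ (hx l)
  rw [mul_apply_eq_vecMul, vecMul_transpose]
  exact hA _ hTX

theorem mulVec_mem_sliceSubmodule_of_mem_span_kronecker {B : Set (Matrix m n R)}
    (hB : ∀ A ∈ B, ∀ u ∈ U, A *ᵥ u ∈ W) {M : Matrix (m × κ) (n × ι) R}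
    (hM : M ∈ Submodule.span R {M | ∃ A ∈ B, ∃ T : Matrix κ ι R, M = A ⊗ₖ T})
    {x : n × ι → R} (hx : x ∈ sliceSubmodule U ι) : M *ᵥ x ∈ sliceSubmodule W κ := by
  induction hM using Submodule.span_induction with
  | mem M hM =>
    obtain ⟨A, hA, T, rfl⟩ := hM
    exact kronecker_mulVec_mem_sliceSubmodule (hB A hA) T hx
  | zero =>
    rw [zero_mulVec]
    exact Submodule.zero_mem _
  | add M N _ _ hM hN =>
    rw [add_mulVec]
    exact Submodule.add_mem _ hM hN
  | smul c M _ hM =>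
    rw [smul_mulVec]
    exact Submodule.smul_mem _ c hM

end CommSemiring

theorem finrank_sliceSubmodule {K n ι : Type*} [Field K] [Finite n] [Fintype ι]
    (W : Submodule K (n → K)) :
    Module.finrank K (sliceSubmodule W ι) = Fintype.card ι * Module.finrank K W := by
  rw [(sliceSubmoduleEquiv W ι).finrank_eq, Module.finrank_pi_fintype, Finset.sum_const,
    Finset.card_univ, smul_eq_mul]

theorem rank_add_le_of_mem_span_kronecker {K m n ι κ : Type*} [Field K] [Finite m]
    [Fintype n] [Fintype ι] [Fintype κ] {B : Set (Matrix m n K)} {U : Submodule K (n → K)}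
    {W : Submodule K (m → K)} (hB : ∀ A ∈ B, ∀ u ∈ U, A *ᵥ u ∈ W) {M : Matrix (m × κ) (n × ι) K}
    (hM : M ∈ Submodule.span K {M | ∃ A ∈ B, ∃ T : Matrix κ ι K, M = A ⊗ₖ T}) :
    M.rank + Fintype.card ι * Module.finrank K U ≤
      Fintype.card n * Fintype.card ι + Fintype.card κ * Module.finrank K W := by
  have hmap : (sliceSubmodule U ι).map M.mulVecLin ≤ sliceSubmodule W κ :=
    Submodule.map_le_iff_le_comap.2 fun _ hx =>
      mulVec_mem_sliceSubmodule_of_mem_span_kronecker hB hM hx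
  simpa only [Matrix.rank, finrank_sliceSubmodule, Module.finrank_fintype_fun_eq_card,
    Fintype.card_prod] using finrank_range_add_finrank_le_of_map_le M.mulVecLin hmap

theorem stmt1_general {F : Type} [Field F] {n : ℕ} (B : Submodule F (Matrix (Fin n) (Fin n) F))
    (U : Submodule F (Fin n → F)) (s : ℕ) (hU : IsShrunkSubspace B U s) (k ℓ : ℕ) :
    ∀ A ∈ blowUp B k ℓ, A.rank ≤ (n - s) * max k ℓ := by
  intro A hA
  let W := Submodule.span F {v | ∃ A ∈ B, ∃ u ∈ U, v = A.mulVec u}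
  have hshrunk : Module.finrank F W + s ≤ Module.finrank F U := hU
  have hBW : ∀ A ∈ B, ∀ u ∈ U, A *ᵥ u ∈ W := fun A hA u hu =>
    Submodule.subset_span ⟨A, hA, u, hu, rfl⟩
  have hrank : A.rank + ℓ * Module.finrank F U ≤ n * ℓ + k * Module.finrank F W := by
    simpa only [Fintype.card_fin] using rank_add_le_of_mem_span_kronecker hBW hA
  obtain ⟨c, hc⟩ : ∃ c, n = Module.finrank F U + c :=
    Nat.exists_eq_add_of_le (by simpa only [Module.finrank_fin_fun] using U.finrank_le)
  calc A.rank ≤ c * ℓ + Module.finrank F W * k := by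
        have hnℓ : n * ℓ = (Module.finrank F U + c) * ℓ := congrArg (· * ℓ) hc
        linarith
    _ ≤ c * max k ℓ + Module.finrank F W * max k ℓ := by
        gcongr
        · exact le_max_right k ℓ
        · exact le_max_left k ℓ
    _ = (c + Module.finrank F W) * max k ℓ := (add_mul ..).symm
    _ ≤ (n - s) * max k ℓ := Nat.mul_le_mul_right _ (by lia)

/-- If `B` has an `s`-shrunk subspace, then every matrix in the `(d,d)`-blow-up of `B`
has rank at most `(n − s)·d`. -/
theorem stmt1 {F : Type} [Field F] {n : ℕ}
    (B : Submodule F (Matrix (Fin n) (Fin n) F))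
    (U : Submodule F (Fin n → F)) (s : ℕ)
    (hU : IsShrunkSubspace B U s)
    (d : ℕ) (hd : 0 < d) :
    ∀ A ∈ blowUp B d d, A.rank ≤ (n - s) * d := by
  simpa only [max_self] using stmt1_general B U s hU d d
end

section
/- (Regularity of blow-ups.) For all positive integers r and d there exists a natural number N such that the following holds. Let F be a field with |F| ≥ N and let B ≤ M(n,F) be a matrix space. If the (d,d)-blow-up B^{(d,d)} contains a matrix A with rank(A) > (r − 1)d, then B^{(d,d)} contains a matrix Ã with rank(Ã) ≥ rd. In particular, the maximal rank of a matrix in B^{(d,d)} is divisible by d whenever |F| is sufficiently large in terms of that maximal rank and d. -/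
open Matrix Kronecker

/-!
Adjoin variables `x_1, …, x_d` to `F`, let `σ` shift them cyclically on `E = F(x_1, …, x_d)`, put
`w = x_1 + ⋯ + x_d`, and choose a `d × d` matrix `U` fixed by `σ` with `U ^ d = w • 1`. Then `σ`
has order `d`, and no power `w ^ s` with `d ∤ s` is a norm for `σ`, because norms of nonzero
rational functions have total degree divisible by `d`.

By Galois descent, the matrices commuting with the semilinear map `U ∘ σ` span all `d × d` matrices
over `E`. A matrix `M` in the `F`-span of the `A ⊗ T`, with `A ∈ B` and `T` such a matrix, commutes
with `(1 ⊗ U) ∘ σ`, which therefore acts on the column space of `M`. Its `d`-th power is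
multiplication by `w`, so determinants exhibit `w ^ rank M` as a norm, and `d ∣ rank M`.

Ranks pass between this `F`-span and the blow-up, since both span the same `E`-space: if a `k`-minor
does not vanish identically on a line, it is a nonzero polynomial of degree at most `k` there, hence
is nonzero at a point of `F` as soon as `|F| > k`.
-/

section Rank

variable {F E m n : Type*} [Field F] [Field E] [Fintype n]

theorem exists_rank_factorization [Fintype m] (M : Matrix m n E) :
    ∃ (P : Matrix m (Fin M.rank) E) (Q : Matrix (Fin M.rank) n E)
      (P' : Matrix (Fin M.rank) m E) (Q' : Matrix n (Fin M.rank) E),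
      P * Q = M ∧ P' * P = 1 ∧ Q * Q' = 1 := by
  classical
  let f := M.toLin'
  let e : LinearMap.range f ≃ₗ[E] (Fin M.rank → E) :=
    LinearEquiv.ofFinrankEq _ _ (by rw [Module.finrank_fin_fun]; rfl)
  let p : (Fin M.rank → E) →ₗ[E] (m → E) := (LinearMap.range f).subtype ∘ₗ e.symm
  let q : (n → E) →ₗ[E] (Fin M.rank → E) := e ∘ₗ f.rangeRestrict
  have hpq : p ∘ₗ q = f := by ext; simp [p, q]
  obtain ⟨p', hp'⟩ := p.exists_leftInverse_of_injective <| LinearMap.ker_eq_bot.2 <|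
    (LinearMap.range f).injective_subtype.comp e.symm.injective
  obtain ⟨q', hq'⟩ := q.exists_rightInverse_of_surjective <| LinearMap.range_eq_top.2 <|
    e.surjective.comp f.surjective_rangeRestrict
  refine ⟨p.toMatrix', q.toMatrix', p'.toMatrix', q'.toMatrix', ?_, ?_, ?_⟩
  · rw [← LinearMap.toMatrix'_comp, hpq, LinearMap.toMatrix'_toLin']
  · rw [← LinearMap.toMatrix'_comp, hp', LinearMap.toMatrix'_id]
  · rw [← LinearMap.toMatrix'_comp, hq', LinearMap.toMatrix'_id]

theorem le_rank_iff_exists_mul_mul_eq_one [Fintype m] {M : Matrix m n E} {k : ℕ} :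
    k ≤ M.rank ↔ ∃ (P : Matrix (Fin k) m E) (Q : Matrix n (Fin k) E), P * M * Q = 1 := by
  classical
  constructor
  · intro hk
    obtain ⟨P, Q, P', Q', hM, hP, hQ⟩ := exists_rank_factorization M
    have hone : P' * M * Q' = 1 := by
      simp_rw [← hM]
      rw [← Matrix.mul_assoc, hP, Matrix.one_mul, hQ]
    refine ⟨P'.submatrix (Fin.castLE hk) id, Q'.submatrix id (Fin.castLE hk), ?_⟩
    simpa [Matrix.submatrix_mul _ _ _ id _ Function.bijective_id,
      Matrix.submatrix_one _ (Fin.castLE_injective hk)] using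
      congrArg (·.submatrix (Fin.castLE hk) (Fin.castLE hk)) hone
  · rintro ⟨P, Q, h⟩
    calc k = (P * M * Q).rank := by simp [h]
      _ ≤ (P * M).rank := rank_mul_le_left _ _
      _ ≤ M.rank := rank_mul_le_right _ _

variable [Finite m]

theorem rank_map_ringHom (f : F →+* E) (M : Matrix m n F) : (M.map f).rank = M.rank := by
  cases nonempty_fintype m
  apply le_antisymm
  · obtain ⟨P, Q, -, -, hM, -, -⟩ := exists_rank_factorization M
    calc (M.map f).rank = (P.map f * Q.map f).rank := by rw [← Matrix.map_mul, hM]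
      _ ≤ (P.map f).rank := rank_mul_le_left _ _
      _ ≤ M.rank := by simpa using rank_le_card_width (P.map f)
  · obtain ⟨P, Q, h⟩ := le_rank_iff_exists_mul_mul_eq_one.1 (le_refl M.rank)
    refine le_rank_iff_exists_mul_mul_eq_one.2 ⟨P.map f, Q.map f, ?_⟩
    rw [← Matrix.map_mul, ← Matrix.map_mul, h, Matrix.map_one _ (map_zero f) (map_one f)]

variable [Algebra F E] {k : ℕ}

theorem exists_det_add_smul_ne_zero {ι : Type*} [Fintype ι] [DecidableEq ι]
    (hF : (Fintype.card ι : Cardinal) < Cardinal.mk F) {W M : Matrix ι ι E} {c : E}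
    (h : (W + c • M).det ≠ 0) : ∃ s : F, (W + s • M).det ≠ 0 := by
  let p : Polynomial E := det ((Polynomial.X : Polynomial E) •
    M.map Polynomial.C + W.map Polynomial.C)
  have eval_p (x : E) : p.eval x = (W + x • M).det := by
    rw [← Polynomial.coe_evalRingHom, RingHom.map_det, add_comm W]
    congr 1
    ext i j
    simp [mul_comm x]
  by_contra! hs
  obtain ⟨S, hS⟩ := Cardinal.exists_finset_le_card F (Fintype.card ι + 1)
    (by exact_mod_cast Order.succ_le_of_lt hF)
  have hp : p = 0 := by
    refine Polynomial.eq_zero_of_natDegree_lt_card_of_eval_eq_zero p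
      (f := fun s : S => algebraMap F E s)
      ((algebraMap F E).injective.comp Subtype.val_injective) (fun s => ?_) ?_
    · rw [eval_p, algebraMap_smul, hs]
    · rw [Fintype.card_coe]
      exact (Polynomial.natDegree_det_X_add_C_le M W).trans_lt hS
  exact h (by rw [← eval_p, hp, Polynomial.eval_zero])

theorem exists_le_rank_add_smul (hF : (k : Cardinal) < Cardinal.mk F) {W M : Matrix m n E}
    {c : E} (h : k ≤ (W + c • M).rank) : ∃ s : F, k ≤ (W + s • M).rank := by
  cases nonempty_fintype m
  obtain ⟨P, Q, hPQ⟩ := le_rank_iff_exists_mul_mul_eq_one.1 h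
  have hdet : (P * W * Q + c • (P * M * Q)).det ≠ 0 := by
    have : P * W * Q + c • (P * M * Q) = 1 := by
      rw [← hPQ]; simp [Matrix.mul_add, Matrix.add_mul]
    simp [this]
  obtain ⟨s, hs⟩ := exists_det_add_smul_ne_zero (F := F) (by simpa using hF) hdet
  refine ⟨s, ?_⟩
  calc k = (P * (W + s • M) * Q).rank := by
        simpa [Matrix.mul_add, Matrix.add_mul] using (rank_of_det_ne_zero hs).symm
    _ ≤ (P * (W + s • M)).rank := rank_mul_le_left _ _
    _ ≤ (W + s • M).rank := rank_mul_le_right _ _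

theorem exists_mem_span_le_rank (hF : (k : Cardinal) < Cardinal.mk F) {V : Set (Matrix m n E)}
    {M : Matrix m n E} (hM : M ∈ Submodule.span E V) (hk : k ≤ M.rank) :
    ∃ M' ∈ Submodule.span F V, k ≤ M'.rank := by
  -- Replace the terms of an `E`-combination of `V` one at a time, keeping the others as `W`.
  suffices ∀ W : Matrix m n E, k ≤ (W + M).rank →
      ∃ M' ∈ Submodule.span F V, k ≤ (W + M').rank by simpa using this 0 (by simpa using hk)
  clear hk
  induction hM using Submodule.closure_induction with
  | zero => exact fun W hW => ⟨0, zero_mem _, hW⟩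
  | add x y _ _ hx hy =>
    intro W hW
    obtain ⟨x', hx', hW⟩ := hx (W + y) (by rwa [add_assoc, add_comm y])
    obtain ⟨y', hy', hW⟩ := hy (W + x') (by rwa [add_right_comm])
    exact ⟨x' + y', add_mem hx' hy', by rwa [← add_assoc]⟩
  | smul_mem c x hx =>
    intro W hW
    obtain ⟨s, hs⟩ := exists_le_rank_add_smul hF hW
    exact ⟨s • x, Submodule.smul_mem _ _ (Submodule.subset_span hx), hs⟩

theorem exists_mem_span_le_rank_iff (hF : (k : Cardinal) < Cardinal.mk F)
    (V : Submodule F (Matrix m n E)) :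
    (∃ M ∈ Submodule.span E (V : Set (Matrix m n E)), k ≤ M.rank) ↔ ∃ M ∈ V, k ≤ M.rank :=
  ⟨fun ⟨_, hM, hk⟩ => by simpa using exists_mem_span_le_rank hF hM hk,
    fun ⟨M, hM, hk⟩ => ⟨M, Submodule.subset_span hM, hk⟩⟩

end Rank

section MatrixMap

variable {R S G m n p q : Type*} [FunLike G R S]

theorem map_kronecker [Mul R] [Mul S] [MulHomClass G R S] (f : G) (A : Matrix m n R)
    (C : Matrix p q R) : (A ⊗ₖ C).map f = A.map f ⊗ₖ C.map f := by
  ext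
  simp

theorem pow_map_eq_self [Fintype m] [DecidableEq m] [Semiring R] [FunLike G R R]
    [RingHomClass G R R] {f : G} {U : Matrix m m R} (hU : U.map f = U) (k : ℕ) :
    (U ^ k).map f = U ^ k := by
  simpa [hU] using map_pow (f : R →+* R).mapMatrix U k

theorem map_map_pow [CommSemiring R] [Semiring S] [Algebra R S] (σ : S ≃ₐ[R] S) (k : ℕ)
    (M : Matrix m n S) : (M.map ⇑(σ ^ k)).map σ = M.map ⇑(σ ^ (k + 1)) := by
  rw [pow_succ']
  rfl

end MatrixMap

section Descent

variable {F E X : Type*} [Field F] [Field E] [Algebra F E] [AddCommGroup X] [Module E X]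

theorem linearIndependent_pow_algEquiv (σ : E ≃ₐ[F] E) :
    LinearIndependent E fun k : Fin (orderOf σ) => ((σ ^ (k : ℕ) : E ≃ₐ[F] E) : E → E) := by
  refine (linearIndependent_monoidHom E E).comp
    (fun k : Fin (orderOf σ) => ((σ ^ (k : ℕ) : E ≃ₐ[F] E) : E →* E)) fun i j hij => ?_
  exact Fin.ext <| pow_injOn_Iio_orderOf i.2 j.2 <|
    AlgEquiv.ext fun x => DFunLike.congr_fun hij x

/-- Galois descent for a cyclic group of automorphisms. -/
theorem span_fixedPoints_eq_top {σ : E ≃ₐ[F] E} (hσ : IsOfFinOrder σ) {θ : X →+ X}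
    (hθ : ∀ (c : E) (x : X), θ (c • x) = σ c • θ x) (hθσ : ∀ x, θ^[orderOf σ] x = x) :
    Submodule.span E (Function.fixedPoints θ) = ⊤ := by
  by_contra hne
  obtain ⟨f, hf, hle⟩ := Submodule.exists_le_ker_of_lt_top _ (lt_top_iff_ne_top.2 hne)
  have iterate_smul (k : ℕ) (c : E) (x : X) : θ^[k] (c • x) = (σ ^ k) c • θ^[k] x := by
    induction k with
    | zero => simp
    | succ k ih =>
      rw [Function.iterate_succ_apply', ih, hθ, pow_succ', Function.iterate_succ_apply']
      rfl
  have trace_mem (x : X) : ∑ k ∈ Finset.range (orderOf σ), θ^[k] x ∈ Function.fixedPoints θ := by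
    have h := Finset.sum_range_succ' (fun k => θ^[k] x) (orderOf σ)
    rw [Finset.sum_range_succ, hθσ, Function.iterate_zero_apply, add_left_inj] at h
    rw [Function.mem_fixedPoints_iff, map_sum]
    simpa only [Function.iterate_succ_apply'] using h.symm
  refine hf (LinearMap.ext fun x => ?_)
  have hsum (c : E) : ∑ k : Fin (orderOf σ), f (θ^[k] x) * (σ ^ (k : ℕ)) c = 0 := by
    have h := hle (Submodule.subset_span (trace_mem (c • x)))
    rw [LinearMap.mem_ker, map_sum, Finset.sum_range] at h
    simpa only [iterate_smul, map_smul, smul_eq_mul, mul_comm] using h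
  exact Fintype.linearIndependent_iff.1 (linearIndependent_pow_algEquiv σ)
    (fun k => f (θ^[k] x)) (funext fun c => by simpa using hsum c) ⟨0, hσ.orderOf_pos⟩

end Descent

section Intertwiner

variable {F E m n : Type*} [Field F] [Field E] [Algebra F E] [Fintype m] [Fintype n]
  {σ : E ≃ₐ[F] E} {U : Matrix m m E} {V : Matrix n n E}

/-- The `F`-space of matrices `M` that intertwine the `σ`-semilinear maps `x ↦ V (σ x)` and
`y ↦ U (σ y)`. It is not an `E`-subspace unless `σ` is trivial. -/
def intertwiner (σ : E ≃ₐ[F] E) (U : Matrix m m E) (V : Matrix n n E) :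
    Submodule F (Matrix m n E) where
  carrier := {M | M * V = U * M.map σ}
  zero_mem' := by simp
  add_mem' {M N} hM hN := by
    simp_all [Matrix.add_mul, Matrix.mul_add, Matrix.map_add]
  smul_mem' c M hM := by
    have hc : (c • M).map σ = c • M.map σ := Matrix.map_smul _ _ (map_smul σ c) M
    simp_all

theorem mem_intertwiner {M : Matrix m n E} : M ∈ intertwiner σ U V ↔ M * V = U * M.map σ :=
  Iff.rfl

theorem kronecker_mem_intertwiner {k l : Type*} [Fintype k] [DecidableEq k] [Fintype l]
    [DecidableEq l] {A : Matrix k l E} {T : Matrix m n E} (hA : A.map σ = A)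
    (hT : T ∈ intertwiner σ U V) :
    A ⊗ₖ T ∈ intertwiner σ ((1 : Matrix k k E) ⊗ₖ U) ((1 : Matrix l l E) ⊗ₖ V) := by
  rw [mem_intertwiner] at hT ⊢
  rw [map_kronecker, hA, ← mul_kronecker_mul, ← mul_kronecker_mul, Matrix.mul_one,
    Matrix.one_mul, hT]

variable [DecidableEq m]

theorem span_intertwiner_eq_top [DecidableEq n] {w : E} (hσ : IsOfFinOrder σ) (hw : w ≠ 0)
    (hU : U.map σ = U) (hV : V.map σ = V) (hUw : U ^ orderOf σ = w • (1 : Matrix m m E))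
    (hVw : V ^ orderOf σ = w • (1 : Matrix n n E)) :
    Submodule.span E (intertwiner σ U V : Set (Matrix m n E)) = ⊤ := by
  have hVdet : IsUnit V.det := by
    rw [← isUnit_iff_isUnit_det, ← isUnit_pow_iff hσ.orderOf_pos.ne', hVw, isUnit_iff_isUnit_det]
    simp [hw]
  have mul_inj : Function.Injective fun T : Matrix m n E => T * V :=
    mul_left_injective_of_inv V V⁻¹ (mul_nonsing_inv V hVdet)
  let θ : Matrix m n E →+ Matrix m n E :=
    { toFun T := U * T.map σ * V⁻¹
      map_zero' := by simp
      map_add' S T := by simp [Matrix.map_add, Matrix.mul_add, Matrix.add_mul] }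
  have hθV (T : Matrix m n E) : θ T * V = U * T.map σ := nonsing_inv_mul_cancel_right V _ hVdet
  have hfix : Function.fixedPoints θ = (intertwiner σ U V : Set (Matrix m n E)) := by
    ext T
    rw [Function.mem_fixedPoints_iff, SetLike.mem_coe, mem_intertwiner, ← hθV, ← mul_inj.eq_iff,
      eq_comm]
  have iterate_mul_pow (k : ℕ) (T : Matrix m n E) :
      θ^[k] T * V ^ k = U ^ k * T.map ⇑(σ ^ k) := by
    induction k with
    | zero => ext; simp
    | succ k ih =>
      calc θ^[k + 1] T * V ^ (k + 1) = U * (θ^[k] T * V ^ k).map σ := by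
            rw [Function.iterate_succ_apply', pow_succ' V, ← Matrix.mul_assoc, hθV, Matrix.map_mul,
              pow_map_eq_self hV, Matrix.mul_assoc]
        _ = U ^ (k + 1) * T.map ⇑(σ ^ (k + 1)) := by
            rw [ih, Matrix.map_mul, pow_map_eq_self hU, map_map_pow, pow_succ' U, Matrix.mul_assoc]
  rw [← hfix]
  refine span_fixedPoints_eq_top hσ (fun c T => ?_) (fun T => ?_)
  · have hc : (c • T).map σ = σ c • T.map σ := by ext; simp
    simp [θ, hc]
  · have hpow := iterate_mul_pow (orderOf σ) T
    rw [hUw, hVw, pow_orderOf_eq_one] at hpow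
    exact smul_right_injective _ hw (by simpa using! hpow)

theorem exists_pow_mul_map_eq {ι : Type*} [Fintype ι] [DecidableEq ι] (hU : U.map σ = U)
    {P : Matrix m ι E} {G : Matrix ι ι E} (hG : U * P.map σ = P * G) (k : ℕ) :
    ∃ H : Matrix ι ι E, U ^ k * P.map ⇑(σ ^ k) = P * H ∧
      H.det = ∏ i ∈ Finset.range k, (σ ^ i) G.det := by
  induction k with
  | zero => exact ⟨1, by ext; simp, by simp⟩
  | succ k ih =>
    obtain ⟨H, hH, hdet⟩ := ih
    refine ⟨G * H.map σ, ?_, ?_⟩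
    · calc U ^ (k + 1) * P.map ⇑(σ ^ (k + 1)) = U * (U ^ k * P.map ⇑(σ ^ k)).map σ := by
            rw [Matrix.map_mul, pow_map_eq_self hU, map_map_pow, pow_succ' U, Matrix.mul_assoc]
        _ = P * (G * H.map σ) := by
            rw [hH, Matrix.map_mul, ← Matrix.mul_assoc, hG, Matrix.mul_assoc]
    · have hHσ : (H.map σ).det = σ H.det := (σ.map_det H).symm
      rw [det_mul, hHσ, hdet, Finset.prod_range_succ', map_prod, mul_comm]
      simp [pow_succ']

/-- The product of the conjugates of `g` under the powers of `σ`; it is the norm of `g` over the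
fixed field of `σ` when `σ` has finite order. -/
noncomputable def cyclicNorm (σ : E ≃ₐ[F] E) (g : E) : E :=
  ∏ i ∈ Finset.range (orderOf σ), (σ ^ i) g

theorem cyclicNorm_div (σ : E ≃ₐ[F] E) (g h : E) :
    cyclicNorm σ (g / h) = cyclicNorm σ g / cyclicNorm σ h := by
  simp only [cyclicNorm, map_div₀, Finset.prod_div_distrib]

theorem orderOf_dvd_rank_of_mem_intertwiner {w : E}
    (hw : ∀ (g : E) (s : ℕ), cyclicNorm σ g = w ^ s → orderOf σ ∣ s) (hU : U.map σ = U)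
    (hUw : U ^ orderOf σ = w • (1 : Matrix m m E)) {M : Matrix m n E}
    (hM : M ∈ intertwiner σ U V) : orderOf σ ∣ M.rank := by
  classical
  obtain ⟨P, Q, P', Q', hPQ, hP, hQ⟩ := exists_rank_factorization M
  -- The column space of `M` is stable under `x ↦ U (σ x)`, which acts on it through `G`.
  let G := Q * V * Q'.map σ
  have hG : U * P.map σ = P * G :=
    calc U * P.map σ = U * P.map σ * (Q * Q').map σ := by simp [hQ]
      _ = U * (P * Q).map σ * Q'.map σ := by simp [Matrix.mul_assoc]
      _ = P * Q * V * Q'.map σ := by rw [hPQ, mem_intertwiner.1 hM]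
      _ = P * G := by simp only [G, Matrix.mul_assoc]
  obtain ⟨H, hH, hdet⟩ := exists_pow_mul_map_eq hU hG (orderOf σ)
  have hHw : H = w • (1 : Matrix (Fin M.rank) (Fin M.rank) E) := by
    have hPid : P.map ⇑(σ ^ orderOf σ) = P := by rw [pow_orderOf_eq_one]; ext; simp
    calc H = P' * (P * H) := by rw [← Matrix.mul_assoc, hP, Matrix.one_mul]
      _ = w • 1 := by rw [← hH, hUw, hPid]; simp [hP]
  refine hw G.det _ ?_
  rw [cyclicNorm, ← hdet, hHw]
  simp

end Intertwiner

theorem exists_pow_eq_smul_one {R : Type*} [CommRing R] [Nontrivial R] {d : ℕ} (hd : d ≠ 0)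
    (w : R) : ∃ U : Matrix (Fin d) (Fin d) R, U ^ d = w • (1 : Matrix (Fin d) (Fin d) R) := by
  let p : Polynomial R := Polynomial.X ^ d - Polynomial.C w
  let b := (AdjoinRoot.powerBasis' (Polynomial.monic_X_pow_sub_C w hd)).basis.reindex
    (finCongr (Polynomial.natDegree_X_pow_sub_C (n := d) (r := w)))
  have hroot : AdjoinRoot.root p ^ d = algebraMap R _ w := by
    have h := AdjoinRoot.mk_self (f := p)
    rwa [map_sub, map_pow, AdjoinRoot.mk_X, AdjoinRoot.mk_C, sub_eq_zero] at h
  refine ⟨Algebra.leftMulMatrix b (AdjoinRoot.root p), ?_⟩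
  rw [← map_pow, hroot, AlgHom.commutes, Algebra.algebraMap_eq_smul_one]

theorem exists_map_eq_self_pow_eq_smul_one {R G : Type*} [CommRing R] [Nontrivial R]
    [FunLike G R R] [RingHomClass G R R] {d : ℕ} (hd : d ≠ 0) (f : G) {w : R} (hw : f w = w) :
    ∃ U : Matrix (Fin d) (Fin d) R, U.map f = U ∧ U ^ d = w • (1 : Matrix (Fin d) (Fin d) R) := by
  let S : Subring R := (f : R →+* R).eqLocus (RingHom.id R)
  obtain ⟨U, hU⟩ := exists_pow_eq_smul_one hd (⟨w, hw⟩ : S)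
  refine ⟨U.map S.subtype, Matrix.ext fun i j => (U i j).2, ?_⟩
  rw [← Matrix.map_pow, hU]
  ext i j
  by_cases h : i = j <;> simp [h]

section TotalDegree

variable {R ι : Type*} [CommRing R] [IsDomain R]

theorem totalDegree_prod_of_ne_zero {κ : Type*} {t : Finset κ} {f : κ → MvPolynomial ι R}
    (hf : ∀ i ∈ t, f i ≠ 0) :
    (∏ i ∈ t, f i).totalDegree = ∑ i ∈ t, (f i).totalDegree := by
  classical
  induction t using Finset.induction_on with
  | empty => simp
  | insert a t ha ih =>
    have ht : ∀ i ∈ t, f i ≠ 0 := fun i hi => hf i (Finset.mem_insert_of_mem hi)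
    rw [Finset.prod_insert ha, Finset.sum_insert ha, MvPolynomial.totalDegree_mul_of_isDomain
      (hf a (Finset.mem_insert_self a t)) (Finset.prod_ne_zero_iff.2 ht), ih ht]

theorem totalDegree_prod_renameEquiv_pow (e : Equiv.Perm ι) {p : MvPolynomial ι R} (hp : p ≠ 0) :
    (∏ i ∈ Finset.range (orderOf e), MvPolynomial.renameEquiv R (e ^ i) p).totalDegree =
      orderOf e * p.totalDegree := by
  rw [totalDegree_prod_of_ne_zero fun i _ => EmbeddingLike.map_ne_zero_iff.2 hp]
  simp only [MvPolynomial.totalDegree_renameEquiv, Finset.sum_const, Finset.card_range, smul_eq_mul]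

variable [Fintype ι] [Nonempty ι]

theorem sum_X_ne_zero : ∑ i, (MvPolynomial.X i : MvPolynomial ι R) ≠ 0 := fun h => by
  classical
  obtain ⟨i⟩ := ‹Nonempty ι›
  simpa using congrArg (MvPolynomial.eval (Pi.single i 1)) h

theorem totalDegree_sum_X_pow (s : ℕ) :
    ((∑ i, MvPolynomial.X i : MvPolynomial ι R) ^ s).totalDegree = s := by
  have h : (∑ i, MvPolynomial.X i : MvPolynomial ι R).IsHomogeneous 1 :=
    MvPolynomial.IsHomogeneous.sum _ _ _ fun i _ => MvPolynomial.isHomogeneous_X R i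
  simpa using (h.pow s).totalDegree (pow_ne_zero s sum_X_ne_zero)

end TotalDegree

section RationalFunctions

variable {F ι : Type*} [Field F]

variable (F ι) in
/-- The field `F(x_i : i ∈ ι)` of rational functions. -/
abbrev RationalFunctionField : Type _ := FractionRing (MvPolynomial ι F)

namespace RationalFunctionField

variable (F) in
/-- The action of permutations of the variables on `F(x_i : i ∈ ι)`. -/
noncomputable def permAut :
    Equiv.Perm ι →* (RationalFunctionField F ι ≃ₐ[F] RationalFunctionField F ι) :=
  (IsFractionRing.fieldEquivOfAlgEquivHom F (RationalFunctionField F ι)).comp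
    { toFun e := MvPolynomial.renameEquiv F e
      map_one' := MvPolynomial.renameEquiv_refl F
      map_mul' e f := (MvPolynomial.renameEquiv_trans F f e).symm }

variable (F ι) in
/-- The sum of all variables. -/
noncomputable def varSum [Fintype ι] : RationalFunctionField F ι :=
  algebraMap (MvPolynomial ι F) _ (∑ i, MvPolynomial.X i)

theorem permAut_algebraMap (e : Equiv.Perm ι) (p : MvPolynomial ι F) :
    permAut F e (algebraMap _ _ p) = algebraMap _ _ (MvPolynomial.renameEquiv F e p) :=
  IsFractionRing.fieldEquivOfAlgEquiv_algebraMap F _ _ _ p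

theorem permAut_injective : Function.Injective (permAut F (ι := ι)) := by
  refine (IsFractionRing.fieldEquivOfAlgEquivHom_injective _ _ F _).comp fun e f h => ?_
  ext i
  simpa using DFunLike.congr_fun h (MvPolynomial.X i)

theorem orderOf_permAut (e : Equiv.Perm ι) : orderOf (permAut F e) = orderOf e :=
  orderOf_injective _ permAut_injective e

theorem cyclicNorm_permAut_algebraMap (e : Equiv.Perm ι) (p : MvPolynomial ι F) :
    cyclicNorm (permAut F e) (algebraMap _ _ p) =
      algebraMap _ _ (∏ i ∈ Finset.range (orderOf e), MvPolynomial.renameEquiv F (e ^ i) p) := by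
  simp_rw [cyclicNorm, orderOf_permAut, ← map_pow, permAut_algebraMap, map_prod]

variable [Fintype ι]

theorem permAut_varSum (e : Equiv.Perm ι) : permAut F e (varSum F ι) = varSum F ι := by
  rw [varSum, permAut_algebraMap]
  congr 1
  simpa using Equiv.sum_comp e (MvPolynomial.X (R := F))

variable [Nonempty ι]

theorem varSum_ne_zero : varSum F ι ≠ 0 :=
  (map_ne_zero_iff _ (IsFractionRing.injective _ _)).2 sum_X_ne_zero

theorem orderOf_dvd_of_cyclicNorm_permAut_eq {e : Equiv.Perm ι}
    {g : RationalFunctionField F ι} {s : ℕ} (hg : cyclicNorm (permAut F e) g = varSum F ι ^ s) :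
    orderOf e ∣ s := by
  let N (p : MvPolynomial ι F) : MvPolynomial ι F :=
    ∏ i ∈ Finset.range (orderOf e), MvPolynomial.renameEquiv F (e ^ i) p
  have N_ne_zero {p} (hp : p ≠ 0) : N p ≠ 0 :=
    Finset.prod_ne_zero_iff.2 fun i _ => EmbeddingLike.map_ne_zero_iff.2 hp
  obtain ⟨p, q, hq, rfl⟩ := IsFractionRing.div_surjective (A := MvPolynomial ι F) g
  have hq : q ≠ 0 := nonZeroDivisors.ne_zero hq
  have hpq : N p = (∑ i, MvPolynomial.X i) ^ s * N q := by
    apply IsFractionRing.injective (MvPolynomial ι F) (RationalFunctionField F ι)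
    have hNq : algebraMap _ (RationalFunctionField F ι) (N q) ≠ 0 := by simpa using N_ne_zero hq
    rw [cyclicNorm_div, cyclicNorm_permAut_algebraMap, cyclicNorm_permAut_algebraMap,
      div_eq_iff hNq] at hg
    rw [hg, varSum, map_mul, map_pow]
  have hsum : (∑ i, MvPolynomial.X i : MvPolynomial ι F) ^ s ≠ 0 := pow_ne_zero s sum_X_ne_zero
  have hp : p ≠ 0 := by
    rintro rfl
    refine mul_ne_zero hsum (N_ne_zero hq) (hpq.symm.trans ?_)
    simp [N, (orderOf_pos e).ne']
  have hdeg := congrArg MvPolynomial.totalDegree hpq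
  rw [MvPolynomial.totalDegree_mul_of_isDomain hsum (N_ne_zero hq), totalDegree_sum_X_pow,
    totalDegree_prod_renameEquiv_pow e hp, totalDegree_prod_renameEquiv_pow e hq] at hdeg
  exact (Nat.dvd_add_left (dvd_mul_right _ _)).1 (hdeg ▸ dvd_mul_right _ _)

end RationalFunctionField

end RationalFunctions

section Kronecker

variable {F m n p q : Type*} [CommSemiring F]

theorem one_kronecker_pow [Fintype m] [DecidableEq m] [Fintype n] [DecidableEq n]
    (U : Matrix n n F) (k : ℕ) : ((1 : Matrix m m F) ⊗ₖ U) ^ k = 1 ⊗ₖ (U ^ k) := by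
  induction k with
  | zero => simp
  | succ k ih => rw [pow_succ, ih, ← mul_kronecker_mul, pow_succ, Matrix.mul_one]

theorem kroneckerBilinear_apply {E : Type*} [Semiring E] [Algebra F E] (A : Matrix m n E)
    (C : Matrix p q E) : kroneckerBilinear (R := F) A C = A ⊗ₖ C :=
  rfl

variable {E : Type*} [CommSemiring E] [Algebra F E]

theorem map_map₂_kroneckerBilinear (B : Submodule F (Matrix m n F))
    (C : Submodule F (Matrix p q F)) :
    (Submodule.map₂ kroneckerBilinear B C).map (Algebra.linearMap F E).mapMatrix =
      Submodule.map₂ kroneckerBilinear (B.map (Algebra.linearMap F E).mapMatrix)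
        (C.map (Algebra.linearMap F E).mapMatrix) := by
  rw [Submodule.map_map₂, Submodule.map₂_map_map]
  congr 1
  ext
  simp [kroneckerBilinear_apply]

theorem span_map₂_kroneckerBilinear (B : Submodule F (Matrix m n E))
    (C : Submodule F (Matrix p q E)) :
    Submodule.span E (Submodule.map₂ kroneckerBilinear B C : Set _) =
      Submodule.map₂ kroneckerBilinear (Submodule.span E (B : Set (Matrix m n E)))
        (Submodule.span E (C : Set (Matrix p q E))) := by
  rw [Submodule.map₂_eq_span_image2, Submodule.span_span_of_tower, Submodule.map₂_span_span]
  rfl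

theorem span_map_algebraMap_top [Finite p] [Finite q] :
    Submodule.span E ((⊤ : Submodule F (Matrix p q F)).map
      (Algebra.linearMap F E).mapMatrix : Set (Matrix p q E)) = ⊤ := by
  classical
  cases nonempty_fintype p
  cases nonempty_fintype q
  refine eq_top_iff.2 fun T _ => ?_
  rw [matrix_eq_sum_single T]
  refine Submodule.sum_mem _ fun i _ => Submodule.sum_mem _ fun j _ => ?_
  have h := Submodule.smul_mem _ (T i j) (Submodule.subset_span (R := E)
    (Submodule.mem_map_of_mem (f := (Algebra.linearMap F E).mapMatrix)
      (Submodule.mem_top (x := single i j (1 : F)))))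
  simpa using h

end Kronecker

section BlowUp

variable {F E m n p q : Type*} [Field F] [Field E] [Algebra F E]
  [Fintype n] [Fintype q]

theorem exists_mem_map₂_le_rank_iff [Finite m] [Finite p] {k : ℕ}
    (hF : (k : Cardinal) < Cardinal.mk F) (B : Submodule F (Matrix m n F))
    {C : Submodule F (Matrix p q E)}
    (hC : Submodule.span E (C : Set (Matrix p q E)) = ⊤) :
    (∃ A ∈ Submodule.map₂ kroneckerBilinear B (⊤ : Submodule F (Matrix p q F)), k ≤ A.rank) ↔
      ∃ M ∈ Submodule.map₂ kroneckerBilinear (B.map (Algebra.linearMap F E).mapMatrix) C,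
        k ≤ M.rank := by
  let P := Submodule.map₂ kroneckerBilinear (B.map (Algebra.linearMap F E).mapMatrix)
    ((⊤ : Submodule F (Matrix p q F)).map (Algebra.linearMap F E).mapMatrix)
  let Q := Submodule.map₂ kroneckerBilinear (B.map (Algebra.linearMap F E).mapMatrix) C
  have hPQ : Submodule.span E (P : Set (Matrix (m × p) (n × q) E)) = Submodule.span E Q := by
    rw [span_map₂_kroneckerBilinear, span_map₂_kroneckerBilinear, span_map_algebraMap_top, hC]
  calc _ ↔ ∃ M ∈ P, k ≤ M.rank := by
        simp only [P, ← map_map₂_kroneckerBilinear, Submodule.mem_map, exists_exists_and_eq_and]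
        refine exists_congr fun A => and_congr_right fun _ => ?_
        rw [← rank_map_ringHom (algebraMap F E) A]
        rfl
    _ ↔ ∃ M ∈ Submodule.span E (P : Set (Matrix (m × p) (n × q) E)), k ≤ M.rank :=
      (exists_mem_span_le_rank_iff hF P).symm
    _ ↔ ∃ M ∈ Q, k ≤ M.rank := by rw [hPQ]; exact exists_mem_span_le_rank_iff hF Q

variable [Fintype p]

theorem map₂_kroneckerBilinear_le_intertwiner [Fintype m] [DecidableEq m] [DecidableEq n]
    (B : Submodule F (Matrix m n F)) (σ : E ≃ₐ[F] E) (U : Matrix p p E) (V : Matrix q q E) :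
    Submodule.map₂ kroneckerBilinear (B.map (Algebra.linearMap F E).mapMatrix)
        (intertwiner σ U V) ≤
      intertwiner σ ((1 : Matrix m m E) ⊗ₖ U) ((1 : Matrix n n E) ⊗ₖ V) := by
  rw [Submodule.map₂_le]
  rintro _ ⟨A, -, rfl⟩ T hT
  exact kronecker_mem_intertwiner (by ext; simp) hT

variable [Finite m] [DecidableEq p]

theorem orderOf_dvd_rank_of_mem_map₂ {B : Submodule F (Matrix m n F)} {σ : E ≃ₐ[F] E} {w : E}
    (hw : ∀ (g : E) (s : ℕ), cyclicNorm σ g = w ^ s → orderOf σ ∣ s)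
    {U : Matrix p p E} (hU : U.map σ = U) (hUw : U ^ orderOf σ = w • (1 : Matrix p p E))
    {V : Matrix q q E} {M : Matrix (m × p) (n × q) E}
    (hM : M ∈ Submodule.map₂ kroneckerBilinear (B.map (Algebra.linearMap F E).mapMatrix)
      (intertwiner σ U V)) :
    orderOf σ ∣ M.rank := by
  classical
  cases nonempty_fintype m
  refine orderOf_dvd_rank_of_mem_intertwiner hw (U := (1 : Matrix m m E) ⊗ₖ U) ?_ ?_
    (map₂_kroneckerBilinear_le_intertwiner B σ U V hM)
  · rw [map_kronecker, hU, Matrix.map_one _ (map_zero σ) (map_one σ)]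
  · rw [one_kronecker_pow, hUw, kronecker_smul, one_kronecker_one]

theorem exists_mem_map₂_mul_orderOf_le_rank {B : Submodule F (Matrix m n F)}
    {σ : E ≃ₐ[F] E} {w : E} (hσ : IsOfFinOrder σ) (hw₀ : w ≠ 0)
    (hw : ∀ (g : E) (s : ℕ), cyclicNorm σ g = w ^ s → orderOf σ ∣ s)
    {U : Matrix p p E} (hU : U.map σ = U) (hUw : U ^ orderOf σ = w • (1 : Matrix p p E)) {r : ℕ}
    (hF : (((r + 1) * orderOf σ : ℕ) : Cardinal) < Cardinal.mk F)
    {A : Matrix (m × p) (n × p) F} (hA : A ∈ Submodule.map₂ kroneckerBilinear B ⊤)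
    (hrank : r * orderOf σ < A.rank) :
    ∃ A' ∈ Submodule.map₂ kroneckerBilinear B (⊤ : Submodule F (Matrix p p F)),
      (r + 1) * orderOf σ ≤ A'.rank := by
  have hspan := span_intertwiner_eq_top hσ hw₀ hU hU hUw hUw
  have hk : r * orderOf σ + 1 ≤ (r + 1) * orderOf σ := by
    rw [add_one_mul]
    gcongr
    exact hσ.orderOf_pos
  obtain ⟨M, hM, hMrank⟩ := (exists_mem_map₂_le_rank_iff
    ((Nat.cast_le.2 hk).trans_lt hF) B hspan).1 ⟨A, hA, hrank⟩
  refine (exists_mem_map₂_le_rank_iff hF B hspan).2 ⟨M, hM, ?_⟩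
  obtain ⟨s, hs⟩ := orderOf_dvd_rank_of_mem_map₂ hw hU hUw hM
  rw [hs, mul_comm (orderOf σ)] at hMrank ⊢
  exact Nat.mul_le_mul_right _ (lt_of_mul_lt_mul_right hMrank (Nat.zero_le _))

end BlowUp

theorem blowUp_eq_map₂ {F : Type} [Field F] {n : ℕ} (B : Submodule F (Matrix (Fin n) (Fin n) F))
    (k ℓ : ℕ) : blowUp B k ℓ = Submodule.map₂ kroneckerBilinear B ⊤ := by
  rw [Submodule.map₂_eq_span_image2, blowUp]
  congr 1
  ext
  simp [kroneckerBilinear_apply, eq_comm]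

theorem exists_perm_orderOf_eq (d : ℕ) :
    ∃ e : Equiv.Perm (Multiplicative (ZMod d)), orderOf e = d := by
  refine ⟨MulAction.toPermHom (Multiplicative (ZMod d)) _ (Multiplicative.ofAdd 1), ?_⟩
  rw [orderOf_injective _ MulAction.toPerm_injective, orderOf_ofAdd_eq_addOrderOf,
    ZMod.addOrderOf_one]

open RationalFunctionField in
theorem stmt4_general {F m n : Type*} [Field F] [Finite m] [Fintype n] {r d : ℕ} [NeZero d]
    (hF : (((r + 1) * d : ℕ) : Cardinal) < Cardinal.mk F) {B : Submodule F (Matrix m n F)}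
    {A : Matrix (m × Fin d) (n × Fin d) F} (hA : A ∈ Submodule.map₂ kroneckerBilinear B ⊤)
    (hrank : r * d < A.rank) :
    ∃ A' ∈ Submodule.map₂ kroneckerBilinear B (⊤ : Submodule F (Matrix (Fin d) (Fin d) F)),
      (r + 1) * d ≤ A'.rank := by
  obtain ⟨e, he⟩ := exists_perm_orderOf_eq d
  have hσ : orderOf (permAut F e) = d := (orderOf_permAut e).trans he
  obtain ⟨U, hU, hUw⟩ :=
    exists_map_eq_self_pow_eq_smul_one (NeZero.ne d) (permAut F e) (permAut_varSum e)
  have hfin : IsOfFinOrder (permAut F e) := orderOf_pos_iff.1 ((NeZero.pos d).trans_eq hσ.symm)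
  have hnorm (g) (s : ℕ) (hg : cyclicNorm (permAut F e) g = varSum F _ ^ s) :
      orderOf (permAut F e) ∣ s :=
    (orderOf_permAut e).dvd.trans (orderOf_dvd_of_cyclicNorm_permAut_eq hg)
  simpa only [hσ] using exists_mem_map₂_mul_orderOf_le_rank hfin varSum_ne_zero hnorm hU
    (by rwa [hσ]) (by rwa [hσ]) hA (by rwa [hσ])

/-- Regularity of blow-ups: for all positive `r, d` there is `N` such that over any
field `F` with `|F| ≥ N`, if the `(d,d)`-blow-up of a matrix space `B ≤ M(n,F)` contains
a matrix of rank greater than `(r−1)·d`, then it contains a matrix of rank at least `r·d`. -/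
theorem stmt4 (r d : ℕ) (hr : 0 < r) (hd : 0 < d) :
    ∃ N : ℕ, ∀ (F : Type) (_ : Field F),
      (N : Cardinal) ≤ Cardinal.mk F →
      ∀ (n : ℕ) (B : Submodule F (Matrix (Fin n) (Fin n) F)),
        (∃ A ∈ blowUp B d d, (r - 1) * d < A.rank) →
        ∃ A' ∈ blowUp B d d, r * d ≤ A'.rank := by
  obtain ⟨r, rfl⟩ := Nat.exists_eq_succ_of_ne_zero hr.ne'
  have : NeZero d := ⟨hd.ne'⟩
  refine ⟨(r + 1) * d + 1, fun F _ hF n B ⟨A, hA, hrank⟩ => ?_⟩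
  rw [blowUp_eq_map₂] at hA ⊢
  exact stmt4_general (Order.succ_le_iff.1 (by exact_mod_cast hF)) hA hrank
end

section
/- For every prime p and every integer s ≥ 1 there exists a field extension K_s of the rational function field F_p(Z) such that K_s/F_p(Z) is a Galois extension of degree p^s whose Galois group is cyclic, and F_p is algebraically closed in K_s (i.e., every element of K_s that is algebraic over F_p already lies in F_p). -/
/-!
Let `S` be a separable closure of `k = F(Z)`, where `F` has characteristic `p`. The operator
`℘ = Frobenius - 1` on the Witt vectors of `S` is surjective with kernel `W(𝔽_p) ≅ ℤ_p`, so a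
solution `x` of `℘ x = [Z]` gives a character `χ : σ ↦ σ x - x` of `Gal(S/k)` with values in
`ℤ_p`, and the kernel of `χ` modulo `p ^ s` cuts out the field `K_s = k(x_0, …, x_{s-1})`.
An automorphism `σ` with `σ x_0 ≠ x_0` has `χ σ ∈ ℤ_pˣ`: its restriction generates
`Gal(K_s/k) ≅ ℤ/p^s`, and an element of `K_s` fixed by `σ` lies in `k`. Since
`x_0 ^ p - x_0 = Z` has no solution in `C(Z)`, where `C` is the algebraic closure of `F` in `S`,
such a `σ` may be chosen to fix `C`; then every constant in `K_s` lies in `k`, hence in `F`.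
-/

universe u

namespace ArtinSchreierWitt

section Operator

open WittVector

variable {p : ℕ} [Fact p.Prime]

/-- The Artin–Schreier–Witt operator `℘ x = F x - x` on Witt vectors, `F` being the Frobenius. -/
noncomputable def wp {R : Type*} [CommRing R] : WittVector p R →+ WittVector p R :=
  (frobenius : WittVector p R →+* WittVector p R).toAddMonoidHom - AddMonoidHom.id _

theorem wp_apply {R : Type*} [CommRing R] (x : WittVector p R) : wp x = frobenius x - x :=
  rfl

-- `(frobenius_isPoly p).map` covers only rings `R` and `S` in the same universe.
theorem map_frobenius {R S : Type*} [CommRing R] [CommRing S] (f : R →+* S)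
    (x : WittVector p R) : map f (frobenius x) = frobenius (map f x) := by
  ext n
  rw [map_coeff, coeff_frobenius, coeff_frobenius, MvPolynomial.map_aeval]
  exact MvPolynomial.eval₂Hom_congr (RingHom.ext_int _ _) (funext fun i ↦ (map_coeff f x i).symm)
    rfl

theorem map_wp {R S : Type*} [CommRing R] [CommRing S] (f : R →+* S) (x : WittVector p R) :
    map f (wp x) = wp (map f x) := by
  rw [wp_apply, wp_apply, map_sub, map_frobenius]

theorem wp_verschiebung {R : Type*} [CommRing R] [CharP R p] (x : WittVector p R) :
    wp (verschiebung x) = verschiebung (wp x) := by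
  rw [wp_apply, wp_apply, map_sub, verschiebung_frobenius_comm x]

theorem coeff_zero_sub {R : Type*} [CommRing R] (x y : WittVector p R) :
    (x - y).coeff 0 = x.coeff 0 - y.coeff 0 :=
  map_sub WittVector.constantCoeff x y

theorem coeff_zero_wp {R : Type*} [CommRing R] [CharP R p] (x : WittVector p R) :
    (wp x).coeff 0 = x.coeff 0 ^ p - x.coeff 0 := by
  rw [wp_apply, coeff_zero_sub, coeff_frobenius_charP]

theorem teichmuller_add_verschiebung_shift {R : Type*} [CommRing R] (x : WittVector p R) :
    teichmuller p (x.coeff 0) + verschiebung (x.shift 1) = x := by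
  ext n
  rw [coeff_add_of_disjoint]
  · cases n with
    | zero => simp
    | succ n => simp [teichmuller_coeff_pos, shift_coeff, add_comm]
  · rintro (_ | n)
    · exact .inr (verschiebung_coeff_zero _)
    · exact .inl (teichmuller_coeff_pos p _ _ n.succ_pos)

theorem exists_wp_teichmuller_add_verschiebung {S : Type*} [Field S] [CharP S p] [IsSepClosed S]
    (a : WittVector p S) : ∃ t a', a = wp (teichmuller p t) + verschiebung a' := by
  obtain ⟨t, ht⟩ := IsSepClosed.exists_root_C_mul_X_pow_add_C_mul_X_add_C' p p 1 (-1)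
    (-a.coeff 0) dvd_rfl (Fact.out : p.Prime).two_le (neg_ne_zero.mpr one_ne_zero)
  have hcoeff : (a - wp (teichmuller p t)).coeff 0 = 0 := by
    rw [coeff_zero_sub, coeff_zero_wp, teichmuller_coeff_zero]
    linear_combination -ht
  refine ⟨t, (a - wp (teichmuller p t)).shift 1, ?_⟩
  have h := teichmuller_add_verschiebung_shift (a - wp (teichmuller p t))
  rw [hcoeff, teichmuller_zero, zero_add] at h
  rw [h, add_sub_cancel]

theorem wp_surjective {S : Type*} [Field S] [CharP S p] [IsSepClosed S] :
    Function.Surjective (wp : WittVector p S → WittVector p S) := by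
  choose t next hnext using exists_wp_teichmuller_add_verschiebung (p := p) (S := S)
  -- Iterating `a = ℘ [t a] + V (next a)` suggests the solution `∑ i, V^i [t (next^[i] a)]`.
  let sol (a : WittVector p S) : WittVector p S := .mk p fun i ↦ t (next^[i] a)
  have sol_eq (a) : sol a = teichmuller p (t a) + verschiebung (sol (next a)) :=
    (teichmuller_add_verschiebung_shift (sol a)).symm.trans <| by
      congr 2
      ext i
      simp [sol, shift_coeff, add_comm 1 i]
  have error_eq (a) : wp (sol a) - a = verschiebung (wp (sol (next a)) - next a) := by
    rw [map_sub, ← wp_verschiebung]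
    nth_rewrite 1 [sol_eq a]
    nth_rewrite 3 [hnext a]
    rw [map_add]
    abel
  have error_coeff (i : ℕ) : ∀ a, (wp (sol a) - a).coeff i = 0 := by
    induction i with
    | zero => exact fun a ↦ by rw [error_eq, verschiebung_coeff_zero]
    | succ i ih => exact fun a ↦ by rw [error_eq, verschiebung_coeff_succ, ih]
  exact fun a ↦ ⟨sol a, sub_eq_zero.mp <| WittVector.ext fun i ↦ by
    rw [error_coeff, zero_coeff]⟩

theorem exists_map_castHom_eq_of_wp_eq_zero {S : Type*} [Field S] [CharP S p]
    {y : WittVector p S} (hy : wp y = 0) :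
    ∃ c : WittVector p (ZMod p), map (ZMod.castHom dvd_rfl S) c = y := by
  have hfrob : frobenius y = y := sub_eq_zero.mp hy
  have hcoeff (i : ℕ) : ∃ c : ZMod p, ZMod.castHom dvd_rfl S c = y.coeff i := by
    rw [← RingHom.mem_fieldRange, ZMod.fieldRange_castHom_eq_bot p,
      Subfield.mem_bot_iff_pow_eq_self S p, ← coeff_frobenius_charP, hfrob]
  choose c hc using hcoeff
  exact ⟨.mk p c, WittVector.ext hc⟩

end Operator

section Reduction

open WittVector

variable {p : ℕ} [Fact p.Prime]

theorem toZModPow_eq_zero_iff {n : ℕ} {c : WittVector p (ZMod p)} :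
    toZModPow p n c = 0 ↔ ∀ i < n, c.coeff i = 0 := by
  rw [← mem_ker_truncate n c, RingHom.mem_ker]
  exact (TruncatedWittVector.zmodEquivTrunc p n).symm.map_eq_zero_iff

theorem zpowers_ofAdd_eq_top_of_isUnit {m : ℕ} {u : ZMod m} (hu : IsUnit u) :
    Subgroup.zpowers (Multiplicative.ofAdd u) = ⊤ := by
  rw [Subgroup.eq_top_iff']
  intro v
  obtain ⟨w, hw⟩ := hu.exists_left_inv
  obtain ⟨l, hl⟩ := ZMod.intCast_surjective (v.toAdd * w)
  refine Subgroup.mem_zpowers_iff.mpr ⟨l, Multiplicative.toAdd.injective ?_⟩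
  rw [toAdd_zpow, toAdd_ofAdd, zsmul_eq_mul, hl, mul_assoc, hw, mul_one]

end Reduction

section GaloisCharacter

variable {k S G : Type*} [Field k] [Field S] [Algebra k S] [IsGalois k S] [Group G]
  {K : IntermediateField k S} {χ : Gal(S/k) →* G}

theorem isGalois_of_ker_eq_fixingSubgroup (hker : χ.ker = K.fixingSubgroup) : IsGalois k K := by
  rw [← InfiniteGalois.normal_iff_isGalois, ← hker]
  infer_instance

theorem nonempty_gal_mulEquiv_of_ker_eq_fixingSubgroup (hker : χ.ker = K.fixingSubgroup)
    (hχ : Function.Surjective χ) : Nonempty (Gal(K/k) ≃* G) := by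
  have := isGalois_of_ker_eq_fixingSubgroup hker
  let restrict := AlgEquiv.restrictNormalHom (F := k) (K₁ := S) K
  exact ⟨(QuotientGroup.quotientKerEquivOfSurjective restrict
    (AlgEquiv.restrictNormalHom_surjective S)).symm.trans <|
      QuotientGroup.liftEquiv _ hχ (K.restrictNormalHom_ker.trans hker.symm)⟩

theorem mem_range_algebraMap_of_zpowers_eq_top (hker : χ.ker = K.fixingSubgroup)
    {σ : Gal(S/k)} (hσ : Subgroup.zpowers (χ σ) = ⊤) {y : S} (hy : y ∈ K) (hσy : σ y = y) :
    y ∈ Set.range (algebraMap k S) := by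
  let H := MulAction.stabilizer Gal(S/k) y
  have hχH : H.map χ = ⊤ := by
    rw [eq_top_iff, ← hσ, Subgroup.zpowers_le]
    exact Subgroup.mem_map_of_mem χ hσy
  have hkerH : χ.ker ≤ H := fun τ hτ ↦ by
    rw [hker] at hτ
    exact (IntermediateField.mem_fixingSubgroup_iff K τ).mp hτ y hy
  have hH : H = ⊤ := by
    rw [← Subgroup.comap_map_eq_self hkerH, hχH, Subgroup.comap_top]
  rw [InfiniteGalois.mem_range_algebraMap_iff_fixed]
  intro τ
  have hτ : τ ∈ H := hH ▸ Subgroup.mem_top τ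
  exact hτ

end GaloisCharacter

section WittCharacter

open IntermediateField WittVector

variable {p : ℕ} [Fact p.Prime] {k S : Type*} [Field k] [Field S] [Algebra k S]

/-- The field `k(x_0, …, x_{n-1})` generated by the first `n` coefficients of a Witt vector. -/
def adjoinCoeff (k : Type*) {S : Type*} [Field k] [Field S] [Algebra k S] (n : ℕ)
    (x : WittVector p S) : IntermediateField k S :=
  adjoin k (x.coeff '' Set.Iio n)

instance finiteDimensional_adjoinCoeff [Algebra.IsIntegral k S] (n : ℕ) (x : WittVector p S) :
    FiniteDimensional k (adjoinCoeff k n x) :=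
  have : Finite (x.coeff '' Set.Iio n) := ((Set.finite_Iio n).image _).to_subtype
  finiteDimensional_adjoin fun y _ ↦ Algebra.IsIntegral.isIntegral y

theorem mem_fixingSubgroup_adjoin_iff {s : Set S} {σ : Gal(S/k)} :
    σ ∈ (adjoin k s).fixingSubgroup ↔ ∀ y ∈ s, σ y = y := by
  rw [← Subgroup.zpowers_le, ← IntermediateField.le_iff_le, adjoin_le_iff]
  refine forall₂_congr fun y _ ↦ ?_
  have h : y ∈ fixedField (Subgroup.zpowers σ) ↔
      Subgroup.zpowers σ ≤ MulAction.stabilizer Gal(S/k) y := mem_fixedField_iff _ _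
  exact h.trans Subgroup.zpowers_le

section Character

variable {a : WittVector p k} {x : WittVector p S}

theorem wp_map_sub_self (hx : wp x = map (algebraMap k S) a) (σ : Gal(S/k)) :
    wp (map (σ : S →+* S) x - x) = 0 := by
  rw [map_sub, ← map_wp, hx, sub_eq_zero]
  ext i
  simp [map_coeff]

variable [CharP S p]

/-- The element of `W(𝔽_p)` whose image in `W(S)` is `σ x - x`, for a solution `x` of an
Artin–Schreier–Witt equation `℘ x = a` over `k`. -/
noncomputable def defect (hx : wp x = map (algebraMap k S) a) (σ : Gal(S/k)) :
    WittVector p (ZMod p) :=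
  (exists_map_castHom_eq_of_wp_eq_zero (wp_map_sub_self hx σ)).choose

theorem map_defect (hx : wp x = map (algebraMap k S) a) (σ : Gal(S/k)) :
    map (ZMod.castHom dvd_rfl S) (defect hx σ) = map (σ : S →+* S) x - x :=
  (exists_map_castHom_eq_of_wp_eq_zero (wp_map_sub_self hx σ)).choose_spec

theorem defect_mul (hx : wp x = map (algebraMap k S) a) (σ τ : Gal(S/k)) :
    defect hx (σ * τ) = defect hx σ + defect hx τ := by
  apply WittVector.map_injective (ZMod.castHom dvd_rfl S) (RingHom.injective _)
  have hστ : map ((σ * τ : Gal(S/k)) : S →+* S) x = map (σ : S →+* S) (map (τ : S →+* S) x) :=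
    WittVector.ext fun _ ↦ rfl
  have hfix : map (σ : S →+* S) (map (τ : S →+* S) x - x) = map (τ : S →+* S) x - x := by
    rw [← map_defect hx τ]
    ext i
    rw [map_coeff, map_coeff]
    exact RingHom.congr_fun
      (Subsingleton.elim ((σ : S →+* S).comp (ZMod.castHom dvd_rfl S)) _) _
  rw [map_sub, sub_eq_iff_eq_add] at hfix
  rw [map_add, map_defect, map_defect, map_defect, hστ, hfix]
  abel

/-- The character `Gal(S/k) → ℤ/p^n` attached to a solution `x` of an Artin–Schreier–Witt equation
over `k`: the class of `σ x - x ∈ W(𝔽_p) ≅ ℤ_p` modulo `p ^ n`. -/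
noncomputable def character (hx : wp x = map (algebraMap k S) a) (n : ℕ) :
    Gal(S/k) →* Multiplicative (ZMod (p ^ n)) :=
  .mk' (fun σ ↦ .ofAdd (toZModPow p n (defect hx σ))) fun σ τ ↦ by
    rw [defect_mul, map_add, ofAdd_add]

theorem character_apply (hx : wp x = map (algebraMap k S) a) (n : ℕ) (σ : Gal(S/k)) :
    character hx n σ = .ofAdd (toZModPow p n (defect hx σ)) :=
  rfl

theorem ker_character (hx : wp x = map (algebraMap k S) a) (n : ℕ) :
    (character hx n).ker = (adjoinCoeff k n x).fixingSubgroup := by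
  ext σ
  have hcast (c : ZMod p) : c = 0 ↔ ZMod.castHom dvd_rfl S c = 0 :=
    (map_eq_zero _).symm
  rw [MonoidHom.mem_ker, character_apply, ofAdd_eq_one, adjoinCoeff,
    mem_fixingSubgroup_adjoin_iff, Set.forall_mem_image, toZModPow_eq_zero_iff]
  simp_rw [hcast, ← map_coeff, map_defect]
  rw [← mem_ker_truncate, RingHom.mem_ker, map_sub, sub_eq_zero, TruncatedWittVector.ext_iff]
  simp only [coeff_truncate, map_coeff, Fin.forall_iff, Set.mem_Iio, RingHom.coe_coe]

theorem isUnit_defect (hx : wp x = map (algebraMap k S) a) {σ : Gal(S/k)}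
    (hσ : σ (x.coeff 0) ≠ x.coeff 0) : IsUnit (defect hx σ) := by
  apply isUnit_of_coeff_zero_ne_zero
  intro h
  have hmap := congr_arg (WittVector.coeff · 0) (map_defect hx σ)
  rw [map_coeff, h, map_zero, coeff_zero_sub, map_coeff] at hmap
  exact hσ (sub_eq_zero.mp hmap.symm)

theorem zpowers_character_eq_top (hx : wp x = map (algebraMap k S) a) (n : ℕ) {σ : Gal(S/k)}
    (hσ : σ (x.coeff 0) ≠ x.coeff 0) : Subgroup.zpowers (character hx n σ) = ⊤ :=
  zpowers_ofAdd_eq_top_of_isUnit ((isUnit_defect hx hσ).map (toZModPow p n))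

theorem nonempty_gal_adjoinCoeff_mulEquiv [IsGalois k S] (hx : wp x = map (algebraMap k S) a)
    (n : ℕ) {σ : Gal(S/k)} (hσ : σ (x.coeff 0) ≠ x.coeff 0) :
    Nonempty (Gal(adjoinCoeff k n x/k) ≃* Multiplicative (ZMod (p ^ n))) := by
  refine nonempty_gal_mulEquiv_of_ker_eq_fixingSubgroup (ker_character hx n) ?_
  rw [← MonoidHom.range_eq_top, eq_top_iff, ← zpowers_character_eq_top hx n hσ,
    Subgroup.zpowers_le]
  exact ⟨σ, rfl⟩

theorem isCyclic_gal_adjoinCoeff [IsGalois k S] (hx : wp x = map (algebraMap k S) a) (n : ℕ)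
    {σ : Gal(S/k)} (hσ : σ (x.coeff 0) ≠ x.coeff 0) : IsCyclic Gal(adjoinCoeff k n x/k) := by
  obtain ⟨e⟩ := nonempty_gal_adjoinCoeff_mulEquiv hx n hσ
  exact e.isCyclic.mpr inferInstance

theorem isGalois_adjoinCoeff [IsGalois k S] (hx : wp x = map (algebraMap k S) a) (n : ℕ) :
    IsGalois k (adjoinCoeff k n x) :=
  isGalois_of_ker_eq_fixingSubgroup (ker_character hx n)

theorem finrank_adjoinCoeff [IsGalois k S] (hx : wp x = map (algebraMap k S) a) (n : ℕ)
    {σ : Gal(S/k)} (hσ : σ (x.coeff 0) ≠ x.coeff 0) :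
    Module.finrank k (adjoinCoeff k n x) = p ^ n := by
  have := isGalois_adjoinCoeff hx n
  obtain ⟨e⟩ := nonempty_gal_adjoinCoeff_mulEquiv hx n hσ
  rw [← IsGalois.card_aut_eq_finrank, Nat.card_congr (e.toEquiv.trans Multiplicative.toAdd),
    Nat.card_zmod]

theorem mem_range_algebraMap_of_mem_adjoinCoeff [IsGalois k S]
    (hx : wp x = map (algebraMap k S) a) {n : ℕ} {σ : Gal(S/k)}
    (hσ : σ (x.coeff 0) ≠ x.coeff 0) {y : S} (hy : y ∈ adjoinCoeff k n x) (hσy : σ y = y) :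
    y ∈ Set.range (algebraMap k S) :=
  mem_range_algebraMap_of_zpowers_eq_top (ker_character hx n) (zpowers_character_eq_top hx n hσ)
    hy hσy

end Character

end WittCharacter

section Constants

open IntermediateField Polynomial

theorem pow_sub_self_ne_X {R : Type*} [CommRing R] [IsDomain R] {n : ℕ} (hn : 2 ≤ n) (f : R[X]) :
    f ^ n - f ≠ X := by
  intro h
  have hdeg : (f ^ n - f).natDegree = 1 := by rw [h, natDegree_X]
  have hmul : 2 * f.natDegree ≤ n * f.natDegree := Nat.mul_le_mul_right _ hn
  rcases Nat.eq_zero_or_pos f.natDegree with hf | hf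
  · have hle := natDegree_sub_le (f ^ n) f
    rw [hdeg, natDegree_pow, hf, mul_zero, max_self] at hle
    omega
  · rw [natDegree_sub_eq_left_of_natDegree_lt (by rw [natDegree_pow]; omega),
      natDegree_pow] at hdeg
    omega

theorem ratFunc_pow_sub_self_ne_X {C : Type*} [Field C] {n : ℕ} (hn : 2 ≤ n) (t : RatFunc C) :
    t ^ n - t ≠ RatFunc.X := by
  intro h
  have hint : IsIntegral C[X] t := by
    refine ⟨X ^ n + (-X - Polynomial.C X), monic_X_pow_add ?_, ?_⟩
    · compute_degree!
    · simp only [eval₂_add, eval₂_sub, eval₂_neg, eval₂_X_pow, eval₂_X, eval₂_C,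
        RatFunc.algebraMap_X]
      linear_combination h
  obtain ⟨f, rfl⟩ := IsIntegrallyClosed.algebraMap_eq_of_integral hint
  refine pow_sub_self_ne_X hn f (RatFunc.algebraMap_injective C ?_)
  rw [map_sub, map_pow, h, RatFunc.algebraMap_X]

theorem pow_sub_self_ne_of_mem_adjoin_transcendental {C S : Type*} [Field C] [Field S] [Algebra C S]
    {z t : S} (hz : Transcendental C z) (ht : t ∈ C⟮z⟯) {n : ℕ} (hn : 2 ≤ n) :
    t ^ n - t ≠ z := by
  intro h
  let e := RatFunc.algEquivOfTranscendental z hz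
  refine ratFunc_pow_sub_self_ne_X hn (e.symm ⟨t, ht⟩) (e.injective (Subtype.ext ?_))
  rw [map_sub, map_pow, e.apply_symm_apply, RatFunc.algEquivOfTranscendental_X]
  exact h

variable {F S : Type*} [Field F] [Field S] [Algebra (RatFunc F) S] [Algebra F S]
  [IsScalarTower F (RatFunc F) S]

theorem algebraMap_mem_adjoin_algebraMap_X (f : RatFunc F) :
    algebraMap (RatFunc F) S f ∈ F⟮algebraMap (RatFunc F) S RatFunc.X⟯ := by
  have hf : f ∈ F⟮(RatFunc.X : RatFunc F)⟯ := RatFunc.adjoin_X (K := F) ▸ mem_top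
  have hmap := adjoin_map F {(RatFunc.X : RatFunc F)} (IsScalarTower.toAlgHom F (RatFunc F) S)
  rw [Set.image_singleton] at hmap
  exact hmap ▸ ⟨f, hf, rfl⟩

theorem exists_gal_fixing_algebraicClosure [IsGalois (RatFunc F) S] {t : S} {n : ℕ} (hn : 2 ≤ n)
    (ht : t ^ n - t = algebraMap (RatFunc F) S RatFunc.X) :
    ∃ σ : Gal(S/RatFunc F), (∀ y : S, IsAlgebraic F y → σ y = y) ∧ σ t ≠ t := by
  let C := algebraicClosure F S
  let z := algebraMap (RatFunc F) S RatFunc.X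
  have hzF : Transcendental F z :=
    (transcendental_algebraMap_iff (algebraMap (RatFunc F) S).injective).mpr
      RatFunc.transcendental_X
  have hz : Transcendental C z := hzF.extendScalars C
  have hle : F⟮z⟯ ≤ C⟮z⟯.restrictScalars F :=
    adjoin_simple_le_iff.mpr (mem_adjoin_simple_self C z)
  let L : IntermediateField (RatFunc F) S := C⟮z⟯.toSubfield.toIntermediateField fun f ↦
    hle (algebraMap_mem_adjoin_algebraMap_X f)
  have htL : t ∉ L := fun h ↦ pow_sub_self_ne_of_mem_adjoin_transcendental hz h hn ht
  rw [← InfiniteGalois.fixedField_fixingSubgroup L, mem_fixedField_iff] at htL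
  push Not at htL
  obtain ⟨σ, hσ, hσt⟩ := htL
  refine ⟨σ, fun y hy ↦ (mem_fixingSubgroup_iff L σ).mp hσ y ?_, hσt⟩
  exact C⟮z⟯.algebraMap_mem ⟨y, mem_algebraicClosure_iff.mpr hy⟩

theorem exists_algebraMap_eq_of_isAlgebraic {y : S} (hy : IsAlgebraic F y)
    (hmem : y ∈ Set.range (algebraMap (RatFunc F) S)) :
    ∃ c : F, algebraMap (RatFunc F) S (algebraMap F (RatFunc F) c) = y := by
  obtain ⟨f, rfl⟩ := hmem
  rw [isAlgebraic_algebraMap_iff (algebraMap (RatFunc F) S).injective] at hy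
  obtain ⟨c, rfl⟩ : ∃ c, f = RatFunc.C c := by
    by_contra hc
    exact f.transcendental_of_ne_C hc hy
  exact ⟨c, rfl⟩

end Constants

end ArtinSchreierWitt

open ArtinSchreierWitt in
theorem stmt6_general (p : ℕ) [Fact p.Prime] (F : Type u) [Field F] [CharP F p] (s : ℕ) :
    ∃ (K : Type u) (_ : Field K) (_ : Algebra (RatFunc F) K),
      IsGalois (RatFunc F) K ∧
      Module.finrank (RatFunc F) K = p ^ s ∧
      IsCyclic (K ≃ₐ[RatFunc F] K) ∧
      (∀ x : K,
        (∃ q : Polynomial F, q ≠ 0 ∧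
          Polynomial.eval₂
            ((algebraMap (RatFunc F) K).comp (algebraMap F (RatFunc F))) x q = 0) →
        x ∈ Set.range ((algebraMap (RatFunc F) K).comp (algebraMap F (RatFunc F)))) := by
  let S := SeparableClosure (RatFunc F)
  have : CharP S p := charP_of_injective_algebraMap (algebraMap F S).injective p
  obtain ⟨x, hx⟩ := wp_surjective <|
    WittVector.map (algebraMap (RatFunc F) S) (WittVector.teichmuller p RatFunc.X)
  have hx₀ : x.coeff 0 ^ p - x.coeff 0 = algebraMap (RatFunc F) S RatFunc.X := by
    rw [← coeff_zero_wp, hx, WittVector.map_coeff, WittVector.teichmuller_coeff_zero]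
  obtain ⟨σ, hσ, hσx⟩ := exists_gal_fixing_algebraicClosure (Fact.out : p.Prime).two_le hx₀
  refine ⟨adjoinCoeff (RatFunc F) s x, inferInstance, inferInstance, isGalois_adjoinCoeff hx s,
    finrank_adjoinCoeff hx s hσx, isCyclic_gal_adjoinCoeff hx s hσx, ?_⟩
  rintro y ⟨q, hq, hqy⟩
  have hy : IsAlgebraic F (y : S) := by
    have h := congr_arg (algebraMap (adjoinCoeff (RatFunc F) s x) S) hqy
    rw [Polynomial.hom_eval₂, map_zero] at h
    exact ⟨q, hq, h⟩
  obtain ⟨c, hc⟩ := exists_algebraMap_eq_of_isAlgebraic hy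
    (mem_range_algebraMap_of_mem_adjoinCoeff hx hσx y.2 (hσ y hy))
  exact ⟨c, Subtype.ext hc⟩

/-- For every prime `p` and `s ≥ 1` there is a cyclic Galois extension `K` of `F_p(Z)`
of degree `p^s` in which `F_p` is algebraically closed. -/
theorem stmt6 (p : ℕ) [Fact p.Prime] (s : ℕ) (hs : 1 ≤ s) :
    ∃ (K : Type) (_ : Field K) (_ : Algebra (RatFunc (ZMod p)) K),
      IsGalois (RatFunc (ZMod p)) K ∧
      Module.finrank (RatFunc (ZMod p)) K = p ^ s ∧
      IsCyclic (K ≃ₐ[RatFunc (ZMod p)] K) ∧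
      (∀ x : K,
        (∃ q : Polynomial (ZMod p), q ≠ 0 ∧
          Polynomial.eval₂
            ((algebraMap (RatFunc (ZMod p)) K).comp
              (algebraMap (ZMod p) (RatFunc (ZMod p)))) x q = 0) →
        x ∈ Set.range
          ((algebraMap (RatFunc (ZMod p)) K).comp
            (algebraMap (ZMod p) (RatFunc (ZMod p))))) :=
  stmt6_general p (ZMod p) s
end

section
/- Let K be a field of characteristic p > 0 and let α ∈ K be such that the polynomial f(X) = X^p − X − α is irreducible over K. Let L = K[X]/(f) and let ω ∈ L be the image of X. Then the field trace satisfies Tr_{L/K}(ω^{p−1}) = −1. -/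
open Polynomial

/-
If `x ^ n = a x + b`, then multiplication by `x ^ (n - 1)` sends `1` to `x ^ (n - 1)` and
`x ^ (j + 1)` to `a x ^ (j + 1) + b x ^ j`. In the basis `1, x, …, x ^ (n - 1)` the diagonal of its
matrix is therefore `0, a, …, a`, so its trace is `(n - 1) a`. For the Artin–Schreier polynomial
`a = 1`, and `n = p` vanishes in `K`.
-/

theorem trace_eq_sum_repr_mul {R S ι : Type*} [CommRing R] [CommRing S] [Algebra R S] [Fintype ι]
    (b : Module.Basis ι R S) (x : S) :
    Algebra.trace R S x = ∑ i, b.repr (x * b i) i := by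
  classical
  simp only [Algebra.trace_eq_matrix_trace b, Matrix.trace, Matrix.diag_apply,
    Algebra.leftMulMatrix_eq_repr_mul]

section PowerBasis

variable {R S : Type*}

theorem powerBasis_repr_gen_pow [CommRing R] [Ring S] [Algebra R S] (pb : PowerBasis R S) {k : ℕ}
    (hk : k < pb.dim) (i : Fin pb.dim) :
    pb.basis.repr (pb.gen ^ k) i = if k = i then 1 else 0 := by
  have hbasis : pb.gen ^ k = pb.basis ⟨k, hk⟩ := by rw [pb.basis_eq_pow]
  rw [hbasis, pb.basis.repr_self_apply]
  simp only [Fin.ext_iff]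

theorem pow_pred_mul_pow_succ_of_pow_eq [CommSemiring R] [Semiring S] [Algebra R S] {x : S}
    {a b : R} {n : ℕ} (hn : n ≠ 0) (hx : x ^ n = a • x + algebraMap R S b) (j : ℕ) :
    x ^ (n - 1) * x ^ (j + 1) = a • x ^ (j + 1) + b • x ^ j := by
  calc x ^ (n - 1) * x ^ (j + 1) = x ^ n * x ^ j := by
        rw [pow_succ', ← mul_assoc, pow_sub_one_mul hn]
    _ = a • x ^ (j + 1) + b • x ^ j := by
        rw [hx, add_mul, smul_mul_assoc, ← pow_succ', ← Algebra.smul_def]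

variable [CommRing R] [CommRing S] [Algebra R S] {pb : PowerBasis R S} {a b : R}

theorem powerBasis_repr_gen_pow_pred_mul_basis (hdim : 2 ≤ pb.dim)
    (hgen : pb.gen ^ pb.dim = a • pb.gen + algebraMap R S b) (i : Fin pb.dim) :
    pb.basis.repr (pb.gen ^ (pb.dim - 1) * pb.basis i) i = if (i : ℕ) = 0 then 0 else a := by
  obtain ⟨i, hi⟩ := i
  rw [pb.basis_eq_pow]
  cases i with
  | zero =>
    have hpred : pb.dim - 1 ≠ 0 := by lia
    rw [pow_zero, mul_one, powerBasis_repr_gen_pow pb (by lia), if_neg hpred, if_pos rfl]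
  | succ j =>
    rw [pow_pred_mul_pow_succ_of_pow_eq (by lia) hgen]
    simp [powerBasis_repr_gen_pow pb hi, powerBasis_repr_gen_pow pb (j.lt_succ_self.trans hi)]

theorem trace_powerBasis_gen_pow_pred (hdim : 2 ≤ pb.dim)
    (hgen : pb.gen ^ pb.dim = a • pb.gen + algebraMap R S b) :
    Algebra.trace R S (pb.gen ^ (pb.dim - 1)) = (pb.dim - 1) * a := by
  calc Algebra.trace R S (pb.gen ^ (pb.dim - 1))
      = ∑ i : Fin pb.dim, if (i : ℕ) = 0 then 0 else a := by
        simp only [trace_eq_sum_repr_mul pb.basis,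
          powerBasis_repr_gen_pow_pred_mul_basis hdim hgen]
    _ = (pb.dim - 1) * a := by
        obtain ⟨m, hm⟩ := Nat.exists_eq_add_of_le' (one_le_two.trans hdim)
        rw [hm, Fin.sum_univ_succ]
        simp

end PowerBasis

section Trinomial

variable {R : Type*} {n : ℕ}

theorem monic_X_pow_sub_linear [Ring R] (hn : 2 ≤ n) (a b : R) :
    (X ^ n - C a * X - C b).Monic := by
  rw [sub_sub]
  exact monic_X_pow_sub (degree_linear_lt.trans_le (Nat.cast_le.mpr hn))

theorem natDegree_X_pow_sub_linear [Ring R] [Nontrivial R] (hn : 2 ≤ n) (a b : R) :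
    (X ^ n - C a * X - C b).natDegree = n := by
  have hlt : (C a * X + C b).natDegree < (X ^ n : R[X]).natDegree := by
    rw [natDegree_X_pow]
    exact natDegree_linear_le.trans_lt hn
  rw [sub_sub, natDegree_sub_eq_left_of_natDegree_lt hlt, natDegree_X_pow]

theorem root_pow_eq_of_X_pow_sub_linear [CommRing R] (n : ℕ) (a b : R) :
    AdjoinRoot.root (X ^ n - C a * X - C b) ^ n =
      a • AdjoinRoot.root (X ^ n - C a * X - C b) + algebraMap R _ b := by
  have hroot := AdjoinRoot.eval₂_root (X ^ n - C a * X - C b)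
  simp only [eval₂_sub, eval₂_mul, eval₂_pow, eval₂_X, eval₂_C] at hroot
  rw [Algebra.smul_def, AdjoinRoot.algebraMap_eq]
  linear_combination hroot

theorem stmt7_general [CommRing R] (hn : 2 ≤ n) (a b : R) :
    Algebra.trace R (AdjoinRoot (X ^ n - C a * X - C b))
      (AdjoinRoot.root (X ^ n - C a * X - C b) ^ (n - 1)) = (n - 1) * a := by
  nontriviality R
  let pb := AdjoinRoot.powerBasis' (monic_X_pow_sub_linear hn a b)
  have hdim : pb.dim = n := natDegree_X_pow_sub_linear hn a b
  have hgen : pb.gen ^ n = a • pb.gen + algebraMap R _ b := root_pow_eq_of_X_pow_sub_linear n a b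
  have htrace := trace_powerBasis_gen_pow_pred (pb := pb) (by rwa [hdim]) (by rwa [hdim])
  rwa [hdim] at htrace

end Trinomial

/-- If `K` has characteristic `p > 0` and `f = X^p − X − α` is irreducible over `K`,
then in `L = K[X]/(f)` the image `ω` of `X` satisfies `Tr_{L/K}(ω^{p−1}) = −1`. -/
theorem stmt7 {K : Type} [Field K] (p : ℕ) (hp : 0 < p) [CharP K p] (α : K)
    (hirr : Irreducible (X ^ p - X - C α : K[X])) :
    Algebra.trace K (AdjoinRoot (X ^ p - X - C α : K[X]))
      (AdjoinRoot.root (X ^ p - X - C α : K[X]) ^ (p - 1)) = -1 := by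
  have htrace := stmt7_general (CharP.char_prime_of_ne_zero K hp.ne').two_le 1 α
  rwa [C_1, one_mul, CharP.cast_eq_zero, zero_sub, mul_one] at htrace
end
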